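/- arXiv:2602.22089 — 4 statements merged into one kernel-verified Lean document; each statement's English description precedes it below -/
import Mathlib

section
/- If G = H[G_v : v ∈ V(H)] is an inflation of a graph H by nonempty graphs G_v, and H is either a complete graph or a graph with no edges, then lcw(G) ≤ 1 + max over v ∈ V(H) of lcw(G_v). -/
/-!
The modules `G_v` are built one after another, with `m = max lcw(G_v)` working labels and one
extra *dead* label `d` carried by every vertex of the modules already completed.  The expression
of `G_v` uses only working labels, so running it leaves the finished part untouched
(`Sim.reach`).  Afterwards all working labels are merged into one of them, `a`
(`reach_collapse`).  If `H` is complete, a single join of `a` with `d` creates all edges from the new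
module to the earlier ones; if `H` is edgeless this join is omitted.  Relabeling `a` to `d` then
restores the invariant (`reach_addModule`).

Since `lcw` is an infimum in `ℕ`, it also has to be known that every finite graph has some
expression (`lcwLE_card`): give each vertex its own label and join the edges one by one.
-/

open scoped Classical

/-! ### Linear clique-width -/

/-- A configuration reached while building a graph by a linear clique-width expression:
the set of vertices introduced so far, the adjacency relation created so far, and the
current labeling of the vertices by labels from `Fin k`. -/
structure LCWConfig (V : Type) (k : ℕ) where
  verts : Set V
  adj : V → V → Prop
  lab : V → Fin k

/-- A single operation of a linear clique-width expression with `k` labels: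
introduce a new vertex with some label, join all vertices labeled `i` to all vertices
labeled `j` (for `i ≠ j`), or relabel every vertex labeled `i` to `j` (for `i ≠ j`). -/
inductive LCWStep {V : Type} {k : ℕ} : LCWConfig V k → LCWConfig V k → Prop
  | intro (C : LCWConfig V k) (v : V) (hv : v ∉ C.verts) (c : Fin k) :
      LCWStep C ⟨insert v C.verts, C.adj, fun x => if x = v then c else C.lab x⟩
  | join (C : LCWConfig V k) (i j : Fin k) (hij : i ≠ j) :
      LCWStep C ⟨C.verts, fun x y => C.adj x y ∨
        (x ∈ C.verts ∧ y ∈ C.verts ∧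
          ((C.lab x = i ∧ C.lab y = j) ∨ (C.lab x = j ∧ C.lab y = i))), C.lab⟩
  | relabel (C : LCWConfig V k) (i j : Fin k) (hij : i ≠ j) :
      LCWStep C ⟨C.verts, C.adj, fun x => if C.lab x = i then j else C.lab x⟩

/-- `lcwLE G k` means that the graph `G` can be constructed by a linear clique-width
expression using (at most) `k` labels. -/
def lcwLE {V : Type} (G : SimpleGraph V) (k : ℕ) : Prop :=
  ∃ ℓ₀ ℓ : V → Fin k,
    Relation.ReflTransGen LCWStep
      (⟨∅, fun _ _ => False, ℓ₀⟩ : LCWConfig V k) ⟨Set.univ, G.Adj, ℓ⟩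

/-- The linear clique-width of a graph `G`: the least number of labels needed to
construct `G` by a linear clique-width expression. -/
noncomputable def lcw {V : Type} (G : SimpleGraph V) : ℕ :=
  sInf {k | lcwLE G k}

/-! ### Modules, prime graphs, inflations -/

/-- A module of a graph: every vertex outside `M` is adjacent to all of `M` or to none of it. -/
def IsModule {V : Type} (G : SimpleGraph V) (M : Set V) : Prop :=
  ∀ u ∈ M, ∀ v ∈ M, ∀ w ∉ M, (G.Adj w u ↔ G.Adj w v)

/-- A graph on at least two vertices is prime if all of its modules are trivial
(empty, singletons, or the whole vertex set). -/
def IsPrime {V : Type} (G : SimpleGraph V) : Prop :=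
  2 ≤ Nat.card V ∧ ∀ M : Set V, IsModule G M → M.Subsingleton ∨ M = Set.univ

/-- `IsInflation G H φ` says that `G` is an inflation of `H`, where `φ` maps each vertex of
`G` to the vertex of `H` whose module (namely the induced subgraph of `G` on the fiber
`φ ⁻¹ {v}`) contains it: fibers are nonempty, and for vertices in distinct fibers,
adjacency in `G` is equivalent to adjacency of the fibers' images in `H`. -/
def IsInflation {V ι : Type} (G : SimpleGraph V) (H : SimpleGraph ι) (φ : V → ι) : Prop :=
  Function.Surjective φ ∧
    ∀ x y : V, φ x ≠ φ y → (G.Adj x y ↔ H.Adj (φ x) (φ y))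

/-! ### Join, quasi-threshold graphs, universal quasi-threshold graphs -/

/-- The join of two graphs: their disjoint union together with all edges between the parts. -/
def GJoin {α β : Type} (G : SimpleGraph α) (H : SimpleGraph β) : SimpleGraph (α ⊕ β) :=
  (Gᶜ ⊕g Hᶜ)ᶜ

/-- Quasi-threshold graphs: those constructible (up to isomorphism) from `K₁` by repeatedly
taking joins with `K₁` and disjoint unions with other quasi-threshold graphs. -/
inductive IsQT : ∀ {V : Type}, SimpleGraph V → Prop
  | single : IsQT (⊥ : SimpleGraph (Fin 1))
  | joinK1 {V : Type} {G : SimpleGraph V} :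
      IsQT G → IsQT (GJoin (⊥ : SimpleGraph (Fin 1)) G)
  | union {V W : Type} {G : SimpleGraph V} {H : SimpleGraph W} :
      IsQT G → IsQT H → IsQT (G ⊕g H)
  | iso {V W : Type} {G : SimpleGraph V} {H : SimpleGraph W} :
      IsQT G → Nonempty (G ≃g H) → IsQT H

/-- Vertex set of the universal quasi-threshold graph `Q_{n+1}`. -/
def QVert : ℕ → Type
  | 0 => Fin 1
  | n + 1 => ((Fin 1) ⊕ QVert n) ⊕ QVert n

/-- The universal quasi-threshold graphs, indexed so that `QGraph (t - 1)` is `Q_t`: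
`Q_1 = K_1` and `Q_{t} = (K_1 ∗ Q_{t-1}) ⊎ Q_{t-1}` for `t ≥ 2`. -/
def QGraph : (n : ℕ) → SimpleGraph (QVert n)
  | 0 => ⊥
  | n + 1 => (GJoin (⊥ : SimpleGraph (Fin 1)) (QGraph n)) ⊕g (QGraph n)

/-! ### Hereditary classes of graphs -/

/-- A hereditary class of finite graphs, represented by the set of its members on the
vertex sets `Fin n`: it is closed under isomorphism and induced subgraphs, which together
amount to closure under induced-subgraph embeddings. -/
def Hereditary (C : ∀ n : ℕ, Set (SimpleGraph (Fin n))) : Prop :=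
  ∀ {m n : ℕ} (H : SimpleGraph (Fin m)) (G : SimpleGraph (Fin n)),
    Nonempty (H ↪g G) → G ∈ C n → H ∈ C m

/-! ### Finite graphs have expressions -/

/-- With one label per vertex, every finite graph can be constructed. -/
theorem lcwLE_card {W : Type} [Fintype W] (G : SimpleGraph W) :
    lcwLE G (Fintype.card W) := by
  let e := Fintype.equivFin W
  have h1 : ∀ s : Finset W, Relation.ReflTransGen LCWStep
      (⟨∅, fun _ _ => False, e⟩ : LCWConfig W _) ⟨↑s, fun _ _ => False, e⟩ := by
    intro s
    induction s using Finset.induction_on with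
    | empty => rw [Finset.coe_empty]
    | insert v s hv ih =>
      refine ih.tail ?_
      convert LCWStep.intro (⟨↑s, fun _ _ => False, e⟩ : LCWConfig W _) v (by simpa using hv)
        (e v) using 2
      · simp
      · funext x
        split_ifs with hx
        · rw [hx]
        · rfl
  have h2 : ∀ s : Finset (W × W), (∀ p ∈ s, G.Adj p.1 p.2) → Relation.ReflTransGen LCWStep
      (⟨Set.univ, fun _ _ => False, e⟩ : LCWConfig W _)
      ⟨Set.univ, fun x y => (x, y) ∈ s ∨ (y, x) ∈ s, e⟩ := by
    intro s
    induction s using Finset.induction_on with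
    | empty => intro _; simp only [Finset.notMem_empty, or_self]; exact .refl
    | insert p s hp ih =>
      intro hs
      refine (ih fun q hq => hs q (Finset.mem_insert_of_mem hq)).tail ?_
      have hne : e p.1 ≠ e p.2 := fun h =>
        (hs p (Finset.mem_insert_self _ _)).ne (e.injective h)
      convert LCWStep.join
        (⟨Set.univ, fun x y => (x, y) ∈ s ∨ (y, x) ∈ s, e⟩ : LCWConfig W _) _ _ hne using 2
      funext x y
      simp only [Finset.mem_insert, Set.mem_univ, true_and, e.apply_eq_iff_eq, Prod.ext_iff,
        eq_iff_iff]
      tauto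
  refine ⟨e, e, ?_⟩
  have h3 := h1 Finset.univ
  rw [Finset.coe_univ] at h3
  refine h3.trans ?_
  convert h2 (Finset.univ.filter fun p => G.Adj p.1 p.2) (by simp) using 2
  funext x y
  simp [G.adj_comm y x]

theorem lcwLE_lcw {W : Type} [Finite W] (G : SimpleGraph W) : lcwLE G (lcw G) := by
  have := Fintype.ofFinite W
  exact Nat.sInf_mem (s := {k | lcwLE G k}) ⟨_, lcwLE_card G⟩

/-! ### Merging labels -/

/-- A set `s` of labels can be merged into a label `a ∉ s` by successive relabelings. -/
theorem reach_collapse {V : Type} {n : ℕ} (C : LCWConfig V n) (a : Fin n) (s : Finset (Fin n))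
    (ha : a ∉ s) :
    Relation.ReflTransGen LCWStep C
      ⟨C.verts, C.adj, fun x => if C.lab x ∈ s then a else C.lab x⟩ := by
  induction s using Finset.induction_on with
  | empty => simp only [Finset.notMem_empty, if_false]; exact .refl
  | insert i s hi ih =>
    rw [Finset.mem_insert, not_or] at ha
    refine (ih ha.2).tail ?_
    convert LCWStep.relabel _ i a (Ne.symm ha.1) using 2
    funext x
    simp only [Finset.mem_insert]
    grind

/-! ### Running an expression next to a finished part -/

/-- `Sim T A d f C D`: the configuration `D` on `V` consists of a finished part on `T`, with
adjacency `A` and constant label `d`, together with a copy of the configuration `C` on the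
vertices of `F`, whose labels are renamed by `f`.  Labels of vertices not yet introduced are
irrelevant and left unconstrained. -/
structure Sim {V : Type} {F : Set V} {k n : ℕ} (T : Set V) (A : V → V → Prop) (d : Fin n)
    (f : Fin k → Fin n) (C : LCWConfig F k) (D : LCWConfig V n) : Prop where
  verts : ∀ x, x ∈ D.verts ↔ x ∈ T ∨ ∃ a ∈ C.verts, a.1 = x
  adj : ∀ x y, D.adj x y ↔ A x y ∨ ∃ a b : F, a.1 = x ∧ b.1 = y ∧ C.adj a b
  old : ∀ x ∈ T, D.lab x = d
  new : ∀ a ∈ C.verts, D.lab a.1 = f (C.lab a)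

/-- Every operation on `C` is mirrored by an operation on `D`: since `d` is not in the range
of `f`, the operations on working labels do not affect the finished part. -/
theorem Sim.step {V : Type} {F : Set V} {k n : ℕ} {T : Set V} {A : V → V → Prop} {d : Fin n}
    {f : Fin k → Fin n} (hf : Function.Injective f) (hd : ∀ i, f i ≠ d)
    (hT : ∀ x ∈ T, x ∉ F) {C C' : LCWConfig F k} {D : LCWConfig V n}
    (h : Sim T A d f C D) (hC : LCWStep C C') : ∃ D', LCWStep D D' ∧ Sim T A d f C' D' := by
  cases hC with
  | intro v hv c =>
    refine ⟨_, LCWStep.intro D v.1 ?_ (f c), ?_, h.adj, ?_, ?_⟩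
    · rw [h.verts]
      rintro (hv' | ⟨a, ha, hav⟩)
      · exact hT _ hv' v.2
      · exact hv (Subtype.ext hav ▸ ha)
    · intro x
      simp only [Set.mem_insert_iff, h.verts]
      constructor
      · rintro (rfl | hx | ⟨a, ha, rfl⟩)
        · exact .inr ⟨v, .inl rfl, rfl⟩
        · exact .inl hx
        · exact .inr ⟨a, .inr ha, rfl⟩
      · rintro (hx | ⟨a, rfl | ha, rfl⟩)
        · exact .inr (.inl hx)
        · exact .inl rfl
        · exact .inr (.inr ⟨a, ha, rfl⟩)
    · intro x hx
      have hne : x ≠ v.1 := fun he => hT x hx (he ▸ v.2)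
      simpa [hne] using h.old x hx
    · intro a ha
      by_cases hav : a = v
      · simp [hav]
      · have hne : a.1 ≠ v.1 := fun he => hav (Subtype.ext he)
        simpa [hav, hne] using h.new a (ha.resolve_left hav)
  | join i j hij =>
    refine ⟨_, LCWStep.join D (f i) (f j) (hf.ne hij), h.verts, ?_, h.old, h.new⟩
    -- A vertex of `D` carrying a working label is an introduced vertex of the copy of `C`.
    have key : ∀ x i, (x ∈ D.verts ∧ D.lab x = f i) ↔
        ∃ a ∈ C.verts, a.1 = x ∧ C.lab a = i := by
      intro x i
      rw [h.verts]
      constructor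
      · rintro ⟨hx | ⟨a, ha, rfl⟩, hl⟩
        · exact absurd (hl.symm.trans (h.old x hx)) (hd i)
        · exact ⟨a, ha, rfl, hf ((h.new a ha).symm.trans hl)⟩
      · rintro ⟨a, ha, rfl, rfl⟩
        exact ⟨.inr ⟨a, ha, rfl⟩, h.new a ha⟩
    intro x y
    have e1 := key x i
    have e2 := key x j
    have e3 := key y i
    have e4 := key y j
    have hx := h.adj x y
    simp only
    constructor
    · rintro (h0 | ⟨hx', hy', ⟨l1, l2⟩ | ⟨l1, l2⟩⟩)
      · rcases hx.1 h0 with h0 | ⟨a, b, h1, h2, h3⟩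
        · exact .inl h0
        · exact .inr ⟨a, b, h1, h2, .inl h3⟩
      · obtain ⟨a, ha, ha1, ha2⟩ := e1.1 ⟨hx', l1⟩
        obtain ⟨b, hb, hb1, hb2⟩ := e4.1 ⟨hy', l2⟩
        exact .inr ⟨a, b, ha1, hb1, .inr ⟨ha, hb, .inl ⟨ha2, hb2⟩⟩⟩
      · obtain ⟨a, ha, ha1, ha2⟩ := e2.1 ⟨hx', l1⟩
        obtain ⟨b, hb, hb1, hb2⟩ := e3.1 ⟨hy', l2⟩
        exact .inr ⟨a, b, ha1, hb1, .inr ⟨ha, hb, .inr ⟨ha2, hb2⟩⟩⟩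
    · rintro (h0 | ⟨a, b, h1, h2, h0 | ⟨ha, hb, ⟨l1, l2⟩ | ⟨l1, l2⟩⟩⟩)
      · exact .inl (hx.2 (.inl h0))
      · exact .inl (hx.2 (.inr ⟨a, b, h1, h2, h0⟩))
      · have p := e1.2 ⟨a, ha, h1, l1⟩
        have q := e4.2 ⟨b, hb, h2, l2⟩
        exact .inr ⟨p.1, q.1, .inl ⟨p.2, q.2⟩⟩
      · have p := e2.2 ⟨a, ha, h1, l1⟩
        have q := e3.2 ⟨b, hb, h2, l2⟩
        exact .inr ⟨p.1, q.1, .inr ⟨p.2, q.2⟩⟩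
  | relabel i j hij =>
    refine ⟨_, LCWStep.relabel D (f i) (f j) (hf.ne hij), h.verts, h.adj, ?_, ?_⟩
    · intro x hx
      simp [h.old x hx, (hd i).symm]
    · intro a ha
      simp only [h.new a ha, hf.eq_iff]
      split_ifs <;> rfl

theorem Sim.reach {V : Type} {F : Set V} {k n : ℕ} {T : Set V} {A : V → V → Prop} {d : Fin n}
    {f : Fin k → Fin n} (hf : Function.Injective f) (hd : ∀ i, f i ≠ d)
    (hT : ∀ x ∈ T, x ∉ F) {C C' : LCWConfig F k} {D : LCWConfig V n}
    (h : Sim T A d f C D) (hC : Relation.ReflTransGen LCWStep C C') :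
    ∃ D', Relation.ReflTransGen LCWStep D D' ∧ Sim T A d f C' D' := by
  induction hC with
  | refl => exact ⟨D, .refl, h⟩
  | tail _ hs ih =>
    obtain ⟨D₁, h₁, hs₁⟩ := ih
    obtain ⟨D₂, h₂, hs₂⟩ := hs₁.step hf hd hT hs
    exact ⟨D₂, h₁.tail h₂, hs₂⟩

/-! ### Adding one module -/

/-- `Done G T d D`: the configuration `D` has constructed exactly the subgraph of `G` induced
on `T`, and every vertex of `T` carries the dead label `d`. -/
structure Done {V : Type} {n : ℕ} (G : SimpleGraph V) (T : Set V) (d : Fin n)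
    (D : LCWConfig V n) : Prop where
  verts : D.verts = T
  adj : ∀ x y, D.adj x y ↔ x ∈ T ∧ y ∈ T ∧ G.Adj x y
  lab : ∀ x ∈ T, D.lab x = d

/-- A finished part `T` can be extended by a nonempty module `F` that is completely joined to
`T` or completely nonadjacent to `T`, provided `F` has an expression with
at most `m` of the `m + 1` labels. -/
theorem reach_addModule {V : Type} {k m : ℕ} {G : SimpleGraph V} {T F : Set V}
    {D : LCWConfig V (m + 1)} (hD : Done G T (Fin.last m) D) (hT : ∀ x ∈ T, x ∉ F)
    (hF : F.Nonempty) (hkm : k ≤ m) (hk : lcwLE (G.induce F) k)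
    (hTF : (∀ x ∈ T, ∀ y ∈ F, G.Adj x y) ∨ (∀ x ∈ T, ∀ y ∈ F, ¬ G.Adj x y)) :
    ∃ D', Relation.ReflTransGen LCWStep D D' ∧ Done G (T ∪ F) (Fin.last m) D' := by
  obtain ⟨ℓ₀, ℓ, hreach⟩ := hk
  obtain ⟨x₀, hx₀⟩ := hF
  let f : Fin k → Fin (m + 1) := fun i => (Fin.castLE hkm i).castSucc
  have hf : Function.Injective f :=
    (Fin.castSucc_injective m).comp (Fin.castLE_injective hkm)
  have hd : ∀ i, f i ≠ Fin.last m := fun i => Fin.castSucc_ne_last _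
  have h0 : Sim T D.adj (Fin.last m) f
      (⟨∅, fun _ _ => False, ℓ₀⟩ : LCWConfig F k) D :=
    ⟨by simp [hD.verts], by simp, hD.lab, by simp⟩
  obtain ⟨D₁, hr₁, hs⟩ := h0.reach hf hd hT hreach
  -- The module being nonempty, at least one working label `a` exists.
  let a := f (ℓ ⟨x₀, hx₀⟩)
  have had : a ≠ Fin.last m := hd _
  have hr₂ := reach_collapse D₁ a (Finset.univ \ {a, Fin.last m}) (by simp)
  generalize hD₂ : (LCWConfig.mk D₁.verts D₁.adj
    fun x => if D₁.lab x ∈ Finset.univ \ {a, Fin.last m} then a else D₁.lab x) = D₂ at hr₂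
  have hv₂ : D₂.verts = T ∪ F := by
    ext x
    rw [← hD₂]
    simp [hs.verts x]
  have ha₂ : ∀ x y, D₂.adj x y ↔
      (x ∈ T ∧ y ∈ T ∧ G.Adj x y) ∨ (x ∈ F ∧ y ∈ F ∧ G.Adj x y) := by
    intro x y
    rw [← hD₂]
    simp only [hs.adj x y, hD.adj x y, SimpleGraph.comap_adj, Function.Embedding.subtype_apply]
    refine or_congr Iff.rfl ⟨?_, ?_⟩
    · rintro ⟨a, b, rfl, rfl, hab⟩
      exact ⟨a.2, b.2, hab⟩
    · rintro ⟨hx, hy, hab⟩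
      exact ⟨⟨x, hx⟩, ⟨y, hy⟩, rfl, rfl, hab⟩
  have hlT : ∀ x ∈ T, D₂.lab x = Fin.last m := by
    intro x hx
    rw [← hD₂]
    simp [hs.old x hx]
  have hlF : ∀ x ∈ F, D₂.lab x = a := by
    intro x hx
    have h1 := hs.new ⟨x, hx⟩ (Set.mem_univ _)
    have h2 : D₁.lab x ≠ Fin.last m := h1 ▸ hd _
    rw [← hD₂]
    simp only [Finset.mem_sdiff, Finset.mem_univ, true_and, Finset.mem_insert,
      Finset.mem_singleton]
    grind
  have hr₂ := hr₁.trans hr₂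
  -- Once the edges between `T` and `F` are right, one relabeling restores the invariant.
  have fin : ∀ D₃ : LCWConfig V (m + 1), Relation.ReflTransGen LCWStep D₂ D₃ →
      D₃.verts = D₂.verts → D₃.lab = D₂.lab →
      (∀ x y, D₃.adj x y ↔ x ∈ T ∪ F ∧ y ∈ T ∪ F ∧ G.Adj x y) →
      ∃ D', Relation.ReflTransGen LCWStep D D' ∧ Done G (T ∪ F) (Fin.last m) D' := by
    intro D₃ hr hv hl hadj
    refine ⟨_, (hr₂.trans hr).tail (LCWStep.relabel D₃ a _ had), hv.trans hv₂, hadj, ?_⟩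
    rintro x (hx | hx)
    · simp [hl, hlT x hx]
    · simp [hl, hlF x hx]
  rcases hTF with hall | hnone
  · refine fin _ (.single (LCWStep.join D₂ a _ had)) rfl rfl ?_
    intro x y
    simp only [ha₂, hv₂]
    have hx1 := hlT x
    have hx2 := hlF x
    have hy1 := hlT y
    have hy2 := hlF y
    have hxy := hall x
    have hyx := hall y
    have hs := G.adj_comm x y
    simp only [Set.mem_union]
    grind
  · refine fin D₂ .refl rfl rfl ?_
    intro x y
    rw [ha₂]
    have hxy := hnone x
    have hyx := hnone y
    have hs := G.adj_comm x y
    simp only [Set.mem_union]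
    grind

/-- If `G = H[G_v : v ∈ V(H)]` is an inflation of a complete or edgeless
graph `H`, then `lcw(G) ≤ 1 + max_{v ∈ V(H)} lcw(G_v)`. -/
theorem lcw_inflation_complete_or_empty {V ι : Type} [Finite V] [Fintype ι]
    (G : SimpleGraph V) (H : SimpleGraph ι) (φ : V → ι) (h : IsInflation G H φ)
    (hH : H = ⊤ ∨ H = ⊥) :
    lcw G ≤ 1 + Finset.univ.sup fun v : ι => lcw (G.induce {x | φ x = v}) := by
  set m := Finset.univ.sup fun v : ι => lcw (G.induce {x | φ x = v})
  have main : ∀ S : Finset ι, ∃ D : LCWConfig V (m + 1), Relation.ReflTransGen LCWStep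
      (⟨∅, fun _ _ => False, fun _ => Fin.last m⟩ : LCWConfig V (m + 1)) D ∧
      Done G {x | φ x ∈ S} (Fin.last m) D := by
    intro S
    induction S using Finset.induction_on with
    | empty => exact ⟨_, .refl, by simp, by simp, by simp⟩
    | insert v S hv ih =>
      obtain ⟨D, hr, hD⟩ := ih
      obtain ⟨D', hr', hD'⟩ := reach_addModule (F := {x | φ x = v}) hD
        (fun x hx hxv => hv (by rw [← show φ x = v from hxv]; exact hx)) (h.1 v)
        (Finset.le_sup (f := fun v : ι => lcw (G.induce {x | φ x = v})) (Finset.mem_univ v))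
        (lcwLE_lcw _) (by
          have hne : ∀ x, φ x ∈ S → ∀ y, φ y = v → φ x ≠ φ y := by
            rintro x hx y rfl he
            exact hv (he ▸ hx)
          rcases hH with rfl | rfl
          · exact .inl fun x hx y hy => (h.2 x y (hne x hx y hy)).2 (hne x hx y hy)
          · exact .inr fun x hx y hy hxy => (h.2 x y (hne x hx y hy)).1 hxy)
      refine ⟨D', hr.trans hr', ?_⟩
      convert hD' using 1
      ext x
      simp [or_comm]
  obtain ⟨D, hr, hD⟩ := main Finset.univ
  rw [add_comm]
  refine Nat.sInf_le ⟨fun _ => Fin.last m, D.lab, ?_⟩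
  convert hr using 1
  have h1 : D.verts = Set.univ := by simpa using hD.verts
  have h2 : D.adj = G.Adj := by
    funext x y
    simpa using hD.adj x y
  rw [← h1, ← h2]
end

section
/- Let C be a hereditary class of graphs, let m ≥ 0, and let t, s ≥ 1. If every prime graph in C has linear clique-width at most m, and Q_t is not in C, and Q̄_s is not in C, then every graph G in C satisfies lcw(G) < (m + 2)(t + s). -/
/-!
The proof is an induction on `t + s + |G|`, based on the following facts.

* An inflation of `H` whose fibers have linear clique-width at most `k` has linear clique-width at
  most `lcw H + k` (`lcwLE_inflation`): build each fiber with `k` fresh labels at the moment the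
  corresponding vertex of `H` is introduced. One fiber may be more expensive if a further label is
  available, since it can be built first (`lcwLE_inflation_special`).
* Every graph on at least two vertices is an inflation of a prime graph, possibly on two vertices
  (`exists_prime_quotient`).

Let `k` be the bound for `t + s - 1`, so that the bound to be shown for `t + s` is `k + m + 2`.

If `G` and its complement are connected, take a prime quotient. Any two of its vertices `u`, `v`
are distinguished by a third one. If `u` and `v` are nonadjacent, their fibers cannot both contain
`Q_{t-1}`, because together with the third vertex they would give `Q_t`; if they are adjacent, their
fibers cannot both contain the complement of `Q_{s-1}`. Hence at most one fiber contains both, and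
all the others have linear clique-width at most `k` (`lcwLE_of_biconnected`).

If `G` is disconnected and a component contains `K_1 ∗ Q_{t-1}`, then the rest of the graph avoids
`Q_{t-1}`, and that component is built first. If no component contains `K_1 ∗ Q_{t-1}`, then all
fibers over the prime quotient of a component avoid `Q_{t-1}`, so that each component has linear
clique-width at most `m + k`; the components are then put together with two more labels
(`lcwLE_of_disconnected`). The case of a disconnected complement is the same after complementation,
and both are treated at once through `tw`.

The induction itself is `lcwLE_core`, with the bound `(m + 2) (t + s - 2)`.
-/

open scoped Classical

/-! ### Linear clique-width expressions over arbitrary label types -/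

/-- `Bld B S A ℓ`: some linear clique-width expression with labels in an arbitrary type `L`,
started from a configuration satisfying `B`, reaches the configuration with vertex set `S`,
adjacency `A` and labeling `ℓ`. Labels of vertices not yet introduced are irrelevant, so the
constructors only constrain labels on the current vertex set. -/
inductive Bld {V L : Type} (B : Set V → (V → V → Prop) → (V → L) → Prop) :
    Set V → (V → V → Prop) → (V → L) → Prop
  | base {S : Set V} {A : V → V → Prop} {ℓ : V → L} (h : B S A ℓ) : Bld B S A ℓ
  | intro {S : Set V} {A : V → V → Prop} {ℓ : V → L} (ℓ' : V → L) (v : V) (hv : v ∉ S)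
      (h : ∀ x ∈ S, ℓ' x = ℓ x) : Bld B S A ℓ → Bld B (insert v S) A ℓ'
  | join {S : Set V} {A : V → V → Prop} {ℓ : V → L} (i j : L) (hij : i ≠ j) :
      Bld B S A ℓ →
      Bld B S (fun x y => A x y ∨
        (x ∈ S ∧ y ∈ S ∧ ((ℓ x = i ∧ ℓ y = j) ∨ (ℓ x = j ∧ ℓ y = i)))) ℓ
  | relabel {S : Set V} {A : V → V → Prop} {ℓ : V → L} (ℓ' : V → L) (i j : L)
      (h : ∀ x ∈ S, ℓ' x = if ℓ x = i then j else ℓ x) :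
      Bld B S A ℓ → Bld B S A ℓ'

/-- The starting configurations with no vertices. -/
def EmptyCfg {V L : Type} (S : Set V) (A : V → V → Prop) (_ : V → L) : Prop :=
  S = ∅ ∧ A = fun _ _ => False

/-- Adjusting labels outside `S` and rewriting the adjacency pointwise. -/
lemma Bld.congr {V L : Type} {B : Set V → (V → V → Prop) → (V → L) → Prop}
    {S S' : Set V} {A A' : V → V → Prop} {ℓ ℓ' : V → L} (h : Bld B S A ℓ)
    (hS : ∀ x, x ∈ S' ↔ x ∈ S) (hA : ∀ x y, A' x y ↔ A x y) (hℓ : ∀ x ∈ S, ℓ' x = ℓ x) :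
    Bld B S' A' ℓ' := by
  obtain rfl : S' = S := Set.ext hS
  obtain rfl : A' = A := by ext x y; exact hA x y
  by_cases hL : Nonempty L
  · obtain ⟨i⟩ := hL
    exact h.relabel ℓ' i i (fun x hx => by rw [hℓ x hx]; split_ifs with h <;> simp [h])
  · have : ℓ' = ℓ := by
      ext x; exact (hL ⟨ℓ x⟩).elim
    rwa [this]

lemma bld_of_lcwLE {V : Type} {G : SimpleGraph V} {k : ℕ} (h : lcwLE G k) :
    ∃ ℓ : V → Fin k, Bld EmptyCfg Set.univ G.Adj ℓ := by
  obtain ⟨ℓ₀, ℓ, h⟩ := h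
  refine ⟨ℓ, ?_⟩
  have key : ∀ C : LCWConfig V k, Relation.ReflTransGen LCWStep
      (⟨∅, fun _ _ => False, ℓ₀⟩ : LCWConfig V k) C → Bld EmptyCfg C.verts C.adj C.lab := by
    intro C hC
    induction hC with
    | refl => exact .base ⟨rfl, rfl⟩
    | tail _ hs ih =>
      cases hs with
      | intro v hv c =>
        refine ih.intro _ v hv (fun x hx => ?_)
        have : x ≠ v := fun h => hv (h ▸ hx)
        simp [this]
      | join i j hij => exact ih.join i j hij
      | relabel i j hij => exact ih.relabel _ i j (fun x _ => by dsimp only; congr)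
  exact key _ h

lemma lcwLE_of_bld {V : Type} {G : SimpleGraph V} {k : ℕ} {ℓ : V → Fin k}
    (h : Bld EmptyCfg Set.univ G.Adj ℓ) : lcwLE G k := by
  have key : ∀ (S : Set V) (A : V → V → Prop) (ℓ : V → Fin k), Bld EmptyCfg S A ℓ →
      ∃ ℓ₀ ℓ' : V → Fin k, Relation.ReflTransGen LCWStep
        (⟨∅, fun _ _ => False, ℓ₀⟩ : LCWConfig V k) ⟨S, A, ℓ'⟩ ∧ ∀ x ∈ S, ℓ x = ℓ' x := by
    intro S A ℓ h
    induction h with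
    | @base S A ℓ h =>
      obtain ⟨rfl, rfl⟩ := h
      exact ⟨ℓ, ℓ, .refl, fun _ _ => rfl⟩
    | @intro S A ℓ ℓ' v hv h _ ih =>
      obtain ⟨ℓ₀, ℓ₁, hr, hl⟩ := ih
      refine ⟨ℓ₀, _, hr.tail (LCWStep.intro _ v hv (ℓ' v)), ?_⟩
      rintro x hx
      by_cases hxv : x = v
      · simp [hxv]
      · have hx' : x ∈ S := by simpa [hxv] using hx
        simp [hxv, h x hx', hl x hx']
    | @join S A ℓ i j hij _ ih =>
      obtain ⟨ℓ₀, ℓ₁, hr, hl⟩ := ih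
      refine ⟨ℓ₀, ℓ₁, ?_, hl⟩
      convert hr.tail (LCWStep.join _ i j hij) using 2
      ext x y
      constructor
      · rintro (h | ⟨hx, hy, h⟩)
        · exact Or.inl h
        · rw [hl x hx, hl y hy] at h
          exact Or.inr ⟨hx, hy, h⟩
      · rintro (h | ⟨hx, hy, h⟩)
        · exact Or.inl h
        · dsimp only at hx hy h
          rw [← hl x hx, ← hl y hy] at h
          exact Or.inr ⟨hx, hy, h⟩
    | @relabel S A ℓ ℓ' i j h _ ih =>
      obtain ⟨ℓ₀, ℓ₁, hr, hl⟩ := ih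
      by_cases hij : i = j
      · refine ⟨ℓ₀, ℓ₁, hr, fun x hx => ?_⟩
        rw [h x hx, hl x hx, hij]
        split_ifs with hh <;> simp [hh]
      · refine ⟨ℓ₀, _, hr.tail (LCWStep.relabel _ i j hij), fun x hx => ?_⟩
        rw [h x hx, hl x hx]
        dsimp only
        congr
  obtain ⟨ℓ₀, ℓ', hr, -⟩ := key _ _ _ h
  exact ⟨ℓ₀, ℓ', hr⟩

/-- An expression for a graph on `W` can be carried out inside a larger construction, on the
vertices `f w` and with the labels `e i`, as long as these vertices and labels are unused. -/
lemma Bld.embed {V W L L' : Type} {B : Set V → (V → V → Prop) → (V → L) → Prop}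
    {S : Set V} {A : V → V → Prop} {ℓ : V → L} (h : Bld B S A ℓ)
    (f : W → V) (hf : Function.Injective f) (hfS : ∀ w, f w ∉ S)
    (e : L' → L) (he : Function.Injective e) (heS : ∀ x ∈ S, ∀ i, ℓ x ≠ e i)
    {T : Set W} {A' : W → W → Prop} {ℓ' : W → L'} (h' : Bld EmptyCfg T A' ℓ') :
    Bld B (S ∪ f '' T) (fun x y => A x y ∨ ∃ w w', f w = x ∧ f w' = y ∧ A' w w')
      (fun x => if hx : ∃ w, f w = x then e (ℓ' hx.choose) else ℓ x) := by
  have hch : ∀ (ℓ' : W → L') (w : W),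
      (if hx : ∃ w', f w' = f w then e (ℓ' hx.choose) else ℓ (f w)) = e (ℓ' w) := by
    intro ℓ' w
    have hx : ∃ w', f w' = f w := ⟨w, rfl⟩
    rw [dif_pos hx, hf hx.choose_spec]
  have hns : ∀ (ℓ' : W → L'), ∀ x ∈ S,
      (if hx : ∃ w', f w' = x then e (ℓ' hx.choose) else ℓ x) = ℓ x := by
    intro ℓ' x hx
    rw [dif_neg]
    rintro ⟨w, rfl⟩
    exact hfS w hx
  induction h' with
  | @base T A' ℓ' hb =>
    obtain ⟨rfl, rfl⟩ := hb
    exact h.congr (by simp) (by simp) (hns ℓ')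
  | @intro T A' ℓ' ℓ'' v hv hl _ ih =>
    have hv' : f v ∉ S ∪ f '' T := by
      rintro (hh | ⟨w, hw, hwv⟩)
      · exact hfS v hh
      · exact hv (hf hwv ▸ hw)
    refine (ih.intro (fun x => if hx : ∃ w, f w = x then e (ℓ'' hx.choose) else ℓ x)
      (f v) hv' ?_).congr ?_ (fun _ _ => Iff.rfl) (fun _ _ => rfl)
    · rintro x (hx | ⟨w, hw, rfl⟩)
      · rw [hns _ x hx, hns _ x hx]
      · simp only [hch, hl w hw]
    · intro x
      simp only [Set.image_insert_eq, Set.mem_union, Set.mem_insert_iff]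
      tauto
  | @join T A' ℓ' i j hij _ ih =>
    refine (ih.join (e i) (e j) (fun hh => hij (he hh))).congr (fun _ => Iff.rfl) ?_
      (fun _ _ => rfl)
    intro x y
    constructor
    · rintro (hxy | ⟨w, w', rfl, rfl, hw | ⟨hw, hw', hw2⟩⟩)
      · exact Or.inl (Or.inl hxy)
      · exact Or.inl (Or.inr ⟨w, w', rfl, rfl, hw⟩)
      · refine Or.inr ⟨Or.inr ⟨w, hw, rfl⟩, Or.inr ⟨w', hw', rfl⟩, ?_⟩
        simp only [hch, he.eq_iff]
        exact hw2
    · rintro ((hxy | ⟨w, w', rfl, rfl, hw⟩) | ⟨hx, hy, hh⟩)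
      · exact Or.inl hxy
      · exact Or.inr ⟨w, w', rfl, rfl, Or.inl hw⟩
      · have hx' : x ∉ S := by
          intro hxS
          rw [hns _ x hxS] at hh
          rcases hh with hh | hh
          · exact heS x hxS _ hh.1
          · exact heS x hxS _ hh.1
        have hy' : y ∉ S := by
          intro hyS
          rw [hns _ y hyS] at hh
          rcases hh with hh | hh
          · exact heS y hyS _ hh.2
          · exact heS y hyS _ hh.2
        obtain ⟨w, hw, rfl⟩ := hx.resolve_left hx'
        obtain ⟨w', hw', rfl⟩ := hy.resolve_left hy'
        simp only [hch, he.eq_iff] at hh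
        exact Or.inr ⟨w, w', rfl, rfl, Or.inr ⟨hw, hw', hh⟩⟩
  | @relabel T A' ℓ' ℓ'' i j hl _ ih =>
    refine ih.relabel _ (e i) (e j) ?_
    rintro x (hx | ⟨w, hw, rfl⟩)
    · rw [hns _ x hx, hns _ x hx, if_neg (heS x hx i)]
    · simp only [hch, hl w hw, he.eq_iff]
      split_ifs <;> rfl

/-- All labels in a finite set `T` can be merged into the single label `c`. -/
lemma Bld.merge {V L : Type} {B : Set V → (V → V → Prop) → (V → L) → Prop}
    {S : Set V} {A : V → V → Prop} {ℓ : V → L} (h : Bld B S A ℓ) (T : Finset L) (c : L) :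
    Bld B S A (fun x => if ℓ x ∈ T then c else ℓ x) := by
  induction T using Finset.induction_on with
  | empty => simpa using h
  | insert a T ha ih =>
    by_cases hc : c = a
    · refine ih.congr (fun _ => Iff.rfl) (fun _ _ => Iff.rfl) (fun x _ => ?_)
      subst hc
      simp only [Finset.mem_insert]
      split_ifs <;> simp_all
    · refine ih.relabel _ a c (fun x _ => ?_)
      simp only [Finset.mem_insert]
      split_ifs <;> simp_all

/-- Transport of an expression along an isomorphism and an enlargement of the label set. -/
lemma lcwLE_of_iso_bld {V W L : Type} {G : SimpleGraph V} {H : SimpleGraph W} (f : H ≃g G)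
    {ℓ : W → L} (h : Bld EmptyCfg Set.univ H.Adj ℓ) {k : ℕ} (e : L → Fin k)
    (he : Function.Injective e) : lcwLE G k := by
  have h0 : Bld EmptyCfg (∅ : Set V) (fun _ _ => False) (fun x => e (ℓ (f.symm x))) :=
    .base ⟨rfl, rfl⟩
  have h1 := h0.embed f f.injective (by simp) e he (by simp) h
  refine lcwLE_of_bld (ℓ := _) (h1.congr ?_ ?_ (fun _ _ => rfl))
  · intro x
    simp only [Set.mem_univ, Set.empty_union, Set.image_univ, true_iff]
    exact f.surjective x
  · intro x y
    simp only [false_or]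
    constructor
    · intro hxy
      exact ⟨f.symm x, f.symm y, by simp, by simp, by simpa using f.symm.map_adj_iff.mpr hxy⟩
    · rintro ⟨w, w', rfl, rfl, hw⟩
      exact f.map_adj_iff.mpr hw

lemma lcwLE.mono {V : Type} {G : SimpleGraph V} {k k' : ℕ} (h : lcwLE G k) (hk : k ≤ k') :
    lcwLE G k' := by
  obtain ⟨ℓ, hℓ⟩ := bld_of_lcwLE h
  exact lcwLE_of_iso_bld (SimpleGraph.Iso.refl) hℓ (Fin.castLE hk) (Fin.castLE_injective hk)

lemma lcwLE.iso {V W : Type} {G : SimpleGraph V} {H : SimpleGraph W} {k : ℕ} (h : lcwLE H k)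
    (f : H ≃g G) : lcwLE G k := by
  obtain ⟨ℓ, hℓ⟩ := bld_of_lcwLE h
  exact lcwLE_of_iso_bld f hℓ id Function.injective_id

/-- The set in the definition of `lcw` is nonempty for finite graphs: give every vertex its own
label and add the edges one by one. -/
lemma exists_lcwLE {V : Type} [Finite V] (G : SimpleGraph V) : ∃ k, lcwLE G k := by
  have : Fintype V := Fintype.ofFinite V
  have h1 : ∀ S : Finset V, Bld EmptyCfg (S : Set V) (fun _ _ => False) (id : V → V) := by
    intro S
    induction S using Finset.induction_on with
    | empty => exact .base ⟨by simp, rfl⟩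
    | insert a S ha ih =>
      rw [Finset.coe_insert]
      exact ih.intro id a (by simpa using ha) (fun _ _ => rfl)
  have h2 : ∀ E : Finset (V × V), (∀ p ∈ E, p.1 ≠ p.2) → Bld EmptyCfg (Set.univ : Set V)
      (fun x y => (x, y) ∈ E ∨ (y, x) ∈ E) (id : V → V) := by
    intro E
    induction E using Finset.induction_on with
    | empty => intro _; simpa using h1 Finset.univ
    | insert p E hp ih =>
      intro hE
      refine ((ih fun q hq => hE q (Finset.mem_insert_of_mem hq)).join p.1 p.2
        (hE p (Finset.mem_insert_self _ _))).congr (fun _ => Iff.rfl) ?_ (fun _ _ => rfl)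
      intro x y
      obtain ⟨a, b⟩ := p
      simp only [Finset.mem_insert, Prod.mk.injEq, Set.mem_univ, true_and, id]
      tauto
  have h3 := h2 (Finset.univ.filter fun p => G.Adj p.1 p.2) (fun p hp => by
    simp only [Finset.mem_filter, Finset.mem_univ, true_and] at hp
    exact hp.ne)
  refine ⟨Fintype.card V, lcwLE_of_iso_bld SimpleGraph.Iso.refl
    (h3.congr (fun _ => Iff.rfl) ?_ (fun _ _ => rfl)) (Fintype.equivFin V)
    (Fintype.equivFin V).injective⟩
  intro x y
  simp [G.adj_comm y x]

lemma lcwLE_of_lcw_le {V : Type} [Finite V] {G : SimpleGraph V} {k : ℕ} (h : lcw G ≤ k) :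
    lcwLE G k :=
  lcwLE.mono (Nat.sInf_mem (s := {k | lcwLE G k}) (exists_lcwLE G)) h

/-- Edgeless and complete graphs are built with two labels, one of them for the newest vertex. -/
lemma lcwLE_two {V : Type} [Finite V] {G : SimpleGraph V} (p : Prop)
    (hG : ∀ x y, G.Adj x y ↔ x ≠ y ∧ p) : lcwLE G 2 := by
  have : Fintype V := Fintype.ofFinite V
  have h1 : ∀ S : Finset V, Bld EmptyCfg (S : Set V)
      (fun x y => x ∈ S ∧ y ∈ S ∧ x ≠ y ∧ p) (fun _ => (0 : Fin 2)) := by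
    intro S
    induction S using Finset.induction_on with
    | empty => exact .base ⟨by simp, by simp⟩
    | insert a S ha ih =>
      rw [Finset.coe_insert]
      have h2 := ih.intro (fun x => if x = a then 1 else 0) a (by simpa using ha)
        (fun x hx => if_neg (by rintro rfl; exact ha hx))
      by_cases hp : p
      · refine ((h2.join 0 1 (by decide)).relabel (fun _ => 0) 1 0 ?_).congr
          (fun _ => Iff.rfl) ?_ (fun _ _ => rfl)
        · intro x _; by_cases hx : x = a <;> simp [hx]
        · intro x y
          by_cases hx : x = a <;> by_cases hy : y = a <;> simp [hx, hy, hp, ha]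
          tauto
      · refine (h2.relabel (fun _ => 0) 1 0 ?_).congr
          (fun _ => Iff.rfl) ?_ (fun _ _ => rfl)
        · intro x _; by_cases hx : x = a <;> simp [hx]
        · intro x y; simp [hp]
  exact lcwLE_of_bld ((h1 Finset.univ).congr (by simp) (by simp [hG]) (fun _ _ => rfl))

/-! ### Inflations -/

/-- An expression for `H` lifts to an expression for an inflation `G` of `H`, with the labels
`e₁ i` in the role of the original ones: whenever a vertex of `H` is introduced, its whole fiber
is built with the extra labels `e₂ j`, and then merged into one class. All starting configurations
in `B` have the same vertex set, whose fibers are dealt with by `hB`. -/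
lemma Bld.inflate {V ι L L₁ : Type} {k : ℕ} {G : SimpleGraph V}
    (φ : V → ι) (e₁ : L₁ → L) (he₁ : Function.Injective e₁)
    (e₂ : Fin k → L) (he₂ : Function.Injective e₂) (he : ∀ i j, e₁ i ≠ e₂ j)
    {B : Set ι → (ι → ι → Prop) → (ι → L₁) → Prop}
    (hB : ∀ S A ℓ, B S A ℓ → Bld EmptyCfg (φ ⁻¹' S)
      (fun x y => (φ x = φ y ∧ φ x ∈ S ∧ G.Adj x y) ∨ A (φ x) (φ y)) (fun x => e₁ (ℓ (φ x))))
    (hk : ∀ i, (∀ S A ℓ, B S A ℓ → i ∉ S) → lcwLE (G.induce (φ ⁻¹' {i})) k)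
    (hBS : ∀ S A ℓ S' A' ℓ', B S A ℓ → B S' A' ℓ' → S = S')
    {S : Set ι} {A : ι → ι → Prop} {ℓ : ι → L₁} (h : Bld B S A ℓ) :
    Bld EmptyCfg (φ ⁻¹' S)
      (fun x y => (φ x = φ y ∧ φ x ∈ S ∧ G.Adj x y) ∨ A (φ x) (φ y)) (fun x => e₁ (ℓ (φ x))) := by
  have hsub : ∀ {S : Set ι} {A : ι → ι → Prop} {ℓ : ι → L₁}, Bld B S A ℓ →
      ∀ S' A' ℓ', B S' A' ℓ' → S' ⊆ S := by
    intro S A ℓ h S' A' ℓ' hS'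
    induction h with
    | base h => exact (hBS _ _ _ _ _ _ hS' h).subset
    | intro _ _ _ _ _ ih => exact ih.trans (Set.subset_insert _ _)
    | join _ _ _ _ ih => exact ih
    | relabel _ _ _ _ _ ih => exact ih
  induction h with
  | base h => exact hB _ _ _ h
  | @intro S A ℓ ℓ' v hv hl hb ih =>
    obtain ⟨m, hm⟩ := bld_of_lcwLE (hk v fun S' A' ℓ'' h' hv' => hv (hsub hb _ _ _ h' hv'))
    have h1 := ih.embed (Subtype.val : (φ ⁻¹' {v} : Set V) → V) Subtype.val_injective
      (by rintro ⟨w, hw⟩ hw'; exact hv (by simpa [show φ w = v from hw] using hw')) e₂ he₂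
      (fun x _ i => he _ i) hm
    refine (h1.merge (Finset.univ.image e₂) (e₁ (ℓ' v))).congr ?_ ?_ ?_
    · intro x
      simp [or_comm]
    · intro x y
      constructor
      · rintro (⟨hxy, hx | hx, hG⟩ | hA)
        · exact Or.inr ⟨⟨x, hx⟩, ⟨y, hxy.symm.trans hx⟩, rfl, rfl, hG⟩
        · exact Or.inl (Or.inl ⟨hxy, hx, hG⟩)
        · exact Or.inl (Or.inr hA)
      · rintro ((⟨hxy, hx, hG⟩ | hA) | ⟨⟨x, hx⟩, ⟨y, hy⟩, rfl, rfl, hG⟩)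
        · exact Or.inl ⟨hxy, Or.inr hx, hG⟩
        · exact Or.inr hA
        · have hx' : φ x = v := hx
          have hy' : φ y = v := hy
          exact Or.inl ⟨hx'.trans hy'.symm, Or.inl hx', hG⟩
    · rintro x (hx | ⟨w, -, rfl⟩)
      · have hx' : φ x ∈ S := hx
        have hxv : φ x ≠ v := fun h => hv (h ▸ hx')
        have hne : ¬ ∃ w : (φ ⁻¹' {v} : Set V), (w : V) = x := by
          rintro ⟨⟨w, hw⟩, rfl⟩; exact hxv hw
        rw [dif_neg hne, if_neg, hl _ hx']
        simp only [Finset.mem_image, Finset.mem_univ, true_and, not_exists]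
        exact fun j hj => he _ _ hj.symm
      · have hex : ∃ w' : (φ ⁻¹' {v} : Set V), (w' : V) = w := ⟨w, rfl⟩
        rw [dif_pos hex, if_pos (by simp)]
        rw [show φ w = v from w.2]
  | @join S A ℓ i j hij hb ih =>
    refine (ih.join (e₁ i) (e₁ j) (fun hh => hij (he₁ hh))).congr (fun _ => Iff.rfl) ?_
      (fun _ _ => rfl)
    intro x y
    simp only [he₁.eq_iff, Set.mem_preimage]
    tauto
  | @relabel S A ℓ ℓ' i j hl hb ih =>
    refine ih.relabel _ (e₁ i) (e₁ j) (fun x hx => ?_)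
    simp only [hl _ hx, he₁.eq_iff]
    split_ifs <;> rfl

lemma inflation_adj {V ι : Type} {G : SimpleGraph V} {H : SimpleGraph ι} {φ : V → ι}
    (h : IsInflation G H φ) (x y : V) :
    G.Adj x y ↔ (φ x = φ y ∧ φ x ∈ Set.univ ∧ G.Adj x y) ∨ H.Adj (φ x) (φ y) := by
  by_cases hxy : φ x = φ y
  · simp [hxy]
  · simp [hxy, h.2 x y hxy]

/-- If all fibers of an inflation of `H` have linear clique-width at most `k`, then the inflation
has linear clique-width at most `lcw H + k`. -/
lemma lcwLE_inflation {V ι : Type} {G : SimpleGraph V} {H : SimpleGraph ι} {φ : V → ι}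
    (h : IsInflation G H φ) {m k : ℕ} (hH : lcwLE H m)
    (hk : ∀ i, lcwLE (G.induce (φ ⁻¹' {i})) k) : lcwLE G (m + k) := by
  obtain ⟨ℓ, hℓ⟩ := bld_of_lcwLE hH
  have := Bld.inflate (G := G) φ (Fin.castAdd k) (Fin.castAdd_injective m k) (Fin.natAdd m)
    (Fin.natAdd_injective k m) (fun i j hij => by
      have := congrArg Fin.val hij
      simp only [Fin.val_castAdd, Fin.val_natAdd] at this
      omega)
    (by rintro S A ℓ ⟨rfl, rfl⟩; exact .base ⟨by simp, by simp⟩)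
    (fun i _ => hk i)
    (by rintro S A ℓ S' A' ℓ' ⟨rfl, -⟩ ⟨rfl, -⟩; rfl) hℓ
  exact lcwLE_of_bld (this.congr (by simp) (inflation_adj h) (fun _ _ => rfl))

/-- The starting configuration consisting of the single vertex `v`, carrying the label `none`. -/
def SingleCfg {ι L : Type} (v : ι) (S : Set ι) (A : ι → ι → Prop) (ℓ : ι → Option L) : Prop :=
  S = {v} ∧ (A = fun _ _ => False) ∧ ℓ v = none

/-- With one additional label, reserved for `v`, any expression can be rearranged so that the
vertex `v` is introduced first. -/
lemma Bld.single {ι L : Type} (v : ι) {S : Set ι} {A : ι → ι → Prop} {ℓ : ι → L}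
    (h : Bld EmptyCfg S A ℓ) :
    Bld (SingleCfg v) (insert v S) A (fun x => if x = v then none else some (ℓ x)) := by
  induction h with
  | base h =>
    obtain ⟨rfl, rfl⟩ := h
    exact .base ⟨by simp, rfl, by simp⟩
  | @intro S A ℓ ℓ' u hu hl _ ih =>
    by_cases huv : u = v
    · refine ih.congr ?_ (fun _ _ => Iff.rfl) ?_
      · intro x; simp [huv]
      · rintro x hx
        by_cases hxv : x = v
        · simp [hxv]
        · have : x ∈ S := by simpa [hxv] using hx
          simp [hxv, hl x this]
    · refine (ih.intro (fun x => if x = v then none else some (ℓ' x)) u (by simp [huv, hu])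
        ?_).congr ?_ (fun _ _ => Iff.rfl) (fun _ _ => rfl)
      · rintro x hx
        by_cases hxv : x = v
        · simp [hxv]
        · have : x ∈ S := by simpa [hxv] using hx
          simp [hxv, hl x this]
      · intro x; simp only [Set.mem_insert_iff]; tauto
  | @join S A ℓ i j hij _ ih =>
    have h1 := ih.join (some i) (some j) (by simpa using hij)
    -- if `v` takes part in the join, the class `none` is joined in a separate operation
    by_cases hv : v ∈ S ∧ (ℓ v = i ∨ ℓ v = j)
    · obtain ⟨hvS, hv⟩ := hv
      rcases hv with hv | hv
      · refine (h1.join none (some j) (by simp)).congr (fun _ => Iff.rfl) ?_ (fun _ _ => rfl)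
        intro x y
        by_cases hx : x = v <;> by_cases hy : y = v <;> simp [hx, hy, hv, hvS, hij]
      · refine (h1.join none (some i) (by simp)).congr (fun _ => Iff.rfl) ?_ (fun _ _ => rfl)
        intro x y
        by_cases hx : x = v <;> by_cases hy : y = v <;> simp [hx, hy, hv, hvS, hij.symm]
    · refine h1.congr (fun _ => Iff.rfl) ?_ (fun _ _ => rfl)
      intro x y
      by_cases hx : x = v <;> by_cases hy : y = v <;> simp [hx, hy]
      all_goals try tauto
  | @relabel S A ℓ ℓ' i j hl _ ih =>
    by_cases hv : v ∈ S
    · refine ih.relabel _ (some i) (some j) (fun x hx => ?_)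
      have hxS : x ∈ S := by simpa [hv] using hx
      by_cases hxv : x = v
      · simp [hxv]
      · simp only [hxv, if_false, hl x hxS, Option.some.injEq]
        split_ifs <;> rfl
    · refine ih.relabel _ (some i) (some j) (fun x hx => ?_)
      by_cases hxv : x = v
      · simp [hxv]
      · have hxS : x ∈ S := by simpa [hxv] using hx
        simp only [hxv, if_false, hl x hxS, Option.some.injEq]
        split_ifs <;> rfl

/-- In an inflation, one fiber may be expensive: it is built first, when all labels are still
available. -/
lemma lcwLE_inflation_special {V ι : Type} {G : SimpleGraph V} {H : SimpleGraph ι} {φ : V → ι}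
    (h : IsInflation G H φ) {m k N : ℕ} (hH : lcwLE H m) (v : ι)
    (hv : lcwLE (G.induce (φ ⁻¹' {v})) N)
    (hk : ∀ i, i ≠ v → lcwLE (G.induce (φ ⁻¹' {i})) k) (hN : m + 1 + k ≤ N) : lcwLE G N := by
  obtain ⟨ℓ, hℓ⟩ := bld_of_lcwLE hH
  obtain ⟨ℓ₁, hℓ₁⟩ := bld_of_lcwLE hv
  have hs := hℓ.single v
  let e₁ : Option (Fin m) → Fin N := fun o =>
    match o with
    | none => ⟨m, by omega⟩
    | some i => ⟨i, by omega⟩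
  have he₁ : Function.Injective e₁ := by
    rintro (_ | i) (_ | j) hij <;> simp only [e₁, Fin.mk.injEq] at hij
    · rfl
    · omega
    · omega
    · rw [Fin.ext hij]
  let e₂ : Fin k → Fin N := fun i => ⟨m + 1 + i, by omega⟩
  have he₂ : Function.Injective e₂ := by
    intro i j hij
    simp only [e₂, Fin.mk.injEq] at hij
    exact Fin.ext (by omega)
  have := Bld.inflate (G := G) φ e₁ he₁ e₂ he₂
    (by
      rintro (_ | i) j hij <;> simp only [e₁, e₂, Fin.mk.injEq] at hij <;> omega)
    (B := SingleCfg v)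
    (by
      rintro S A ℓ ⟨rfl, rfl, hl⟩
      have h0 : Bld EmptyCfg (∅ : Set V) (fun _ _ => False) (fun _ => e₁ none) :=
        .base ⟨rfl, rfl⟩
      have h1 := h0.embed (Subtype.val : (φ ⁻¹' {v} : Set V) → V) Subtype.val_injective
        (by simp) id Function.injective_id (by simp) hℓ₁
      refine (h1.merge Finset.univ (e₁ none)).congr (by simp) ?_ ?_
      · intro x y
        simp only [or_false, false_or]
        constructor
        · rintro ⟨hxy, hx, hG⟩
          exact ⟨⟨x, hx⟩, ⟨y, hxy.symm.trans hx⟩, rfl, rfl, hG⟩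
        · rintro ⟨⟨x, hx⟩, ⟨y, hy⟩, rfl, rfl, hG⟩
          exact ⟨Eq.trans hx (Eq.symm hy), hx, hG⟩
      · rintro x (hx | ⟨w, -, rfl⟩)
        · exact hx.elim
        · rw [if_pos (Finset.mem_univ _), show φ w = v from w.2, hl])
    (fun i hi => hk i (by
      rintro rfl
      exact hi {i} (fun _ _ => False) (fun _ => none) ⟨rfl, rfl, rfl⟩ rfl))
    (by rintro S A ℓ S' A' ℓ' ⟨rfl, -⟩ ⟨rfl, -⟩; rfl) hs
  exact lcwLE_of_bld (this.congr (by simp) (by simpa using inflation_adj h) (fun _ _ => rfl))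

/-! ### Prime quotients -/

lemma IsInflation.comp {V ι κ : Type} {G : SimpleGraph V} {H : SimpleGraph ι}
    {K : SimpleGraph κ} {φ : V → ι} {ψ : ι → κ} (h : IsInflation G H φ)
    (h' : IsInflation H K ψ) : IsInflation G K (ψ ∘ φ) := by
  refine ⟨h'.1.comp h.1, fun x y hxy => ?_⟩
  rw [h.2 x y (fun hh => hxy (congrArg ψ hh)), h'.2 _ _ hxy, Function.comp, Function.comp]

/-- Choosing one vertex in each fiber embeds the quotient. -/
lemma IsInflation.embedding {V ι : Type} {G : SimpleGraph V} {H : SimpleGraph ι}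
    {φ : V → ι} (h : IsInflation G H φ) : Nonempty (H ↪g G) := by
  refine ⟨⟨⟨Function.surjInv h.1, Function.injective_surjInv h.1⟩, ?_⟩⟩
  intro a b
  by_cases hab : a = b
  · simp [hab]
  · have := h.2 (Function.surjInv h.1 a) (Function.surjInv h.1 b)
      (by simpa [Function.surjInv_eq] using hab)
    simpa [Function.surjInv_eq] using this

/-- Every finite graph with at least two vertices is an inflation of a prime graph: as long as
the quotient has a nontrivial module, collapse that module to a point. -/
lemma exists_prime_quotient (n : ℕ) : ∀ {ι : Type} [Finite ι] [Nontrivial ι] (H : SimpleGraph ι),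
    Nat.card ι = n → ∃ (κ : Type) (K : SimpleGraph κ) (φ : ι → κ),
      Finite κ ∧ IsInflation H K φ ∧ IsPrime K := by
  induction n using Nat.strong_induction_on with
  | _ n ih =>
    intro ι _ _ H hn
    by_cases hp : IsPrime H
    · exact ⟨ι, H, id, inferInstance, ⟨Function.surjective_id, fun _ _ _ => Iff.rfl⟩, hp⟩
    · have h2 : 2 ≤ Nat.card ι := Finite.one_lt_card
      obtain ⟨M, hM, hMs, hMu⟩ : ∃ M : Set ι, IsModule H M ∧ ¬ M.Subsingleton ∧ M ≠ Set.univ := by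
        by_contra hcon
        push Not at hcon
        exact hp ⟨h2, fun M hM => by
          by_cases hs : M.Subsingleton
          · exact Or.inl hs
          · exact Or.inr (hcon M hM (Set.not_subsingleton_iff.mp hs))⟩
      obtain ⟨a, ha, b, hb, hab⟩ := Set.not_subsingleton_iff.mp hMs
      obtain ⟨c, hc⟩ := (Set.ne_univ_iff_exists_notMem M).mp hMu
      let T : Set ι := {x | x ∉ M ∨ x = a}
      have haT : a ∈ T := Or.inr rfl
      have hcT : c ∈ T := Or.inl hc
      have : Nontrivial T := ⟨⟨⟨a, haT⟩, ⟨c, hcT⟩, fun h => hc (by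
        have hac : a = c := congrArg Subtype.val h
        exact hac ▸ ha)⟩⟩
      have hcard : Nat.card T < n := by
        rw [← hn, ← Set.ncard_univ ι, Nat.card_coe_set_eq]
        refine Set.ncard_lt_ncard ⟨Set.subset_univ _, fun hh => ?_⟩
        rcases hh (Set.mem_univ b) with hh | hh
        · exact hh hb
        · exact hab hh.symm
      let r : ι → T := fun x => if hx : x ∈ M then ⟨a, haT⟩ else ⟨x, Or.inl hx⟩
      have hr : IsInflation H (H.induce T) r := by
        refine ⟨?_, fun x y hxy => ?_⟩
        · rintro ⟨x, hx⟩
          refine ⟨x, ?_⟩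
          by_cases hxM : x ∈ M
          · have : x = a := hx.resolve_left (fun h => h hxM)
            subst this
            simp [r, ha]
          · simp [r, hxM]
        · by_cases hx : x ∈ M <;> by_cases hy : y ∈ M
          · simp [r, hx, hy] at hxy
          · simp only [r, hx, hy, dif_pos, dif_neg, not_false_eq_true, SimpleGraph.comap_adj,
              Function.Embedding.subtype_apply]
            rw [H.adj_comm x y, H.adj_comm a y]
            exact hM x hx a ha y hy
          · simp only [r, hx, hy, dif_pos, dif_neg, not_false_eq_true, SimpleGraph.comap_adj,
              Function.Embedding.subtype_apply]
            exact hM y hy a ha x hx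
          · simp [r, hx, hy]
      obtain ⟨κ, K, φ, hκ, hφ, hK⟩ := ih _ hcard (H.induce T) rfl
      exact ⟨κ, K, φ ∘ r, hκ, hr.comp hφ, hK⟩

/-! ### Complementation -/

/-- The graph `G` itself or its complement, depending on `e`; this allows disjoint unions and
joins to be treated together. -/
def tw {V : Type} (e : Bool) (G : SimpleGraph V) : SimpleGraph V := if e then G else Gᶜ

lemma tw_adj {V : Type} (e : Bool) (G : SimpleGraph V) (x y : V) :
    (tw e G).Adj x y ↔ x ≠ y ∧ (G.Adj x y ↔ e = true) := by
  cases e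
  · simp [tw]
  · simpa [tw] using fun h : G.Adj x y => h.ne

lemma tw_induce {V : Type} (e : Bool) (G : SimpleGraph V) (S : Set V) :
    tw e (G.induce S) = (tw e G).induce S := by
  ext x y
  simp [tw_adj, Subtype.ext_iff]

lemma tw_embedding {V W : Type} (e : Bool) {G : SimpleGraph V} {F : SimpleGraph W}
    (f : F ↪g G) : Nonempty (tw e F ↪g tw e G) :=
  ⟨⟨f.toEmbedding, by intro x y; simp [tw_adj]⟩⟩

lemma IsInflation.tw {V ι : Type} {G : SimpleGraph V} {H : SimpleGraph ι} {φ : V → ι}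
    (h : IsInflation G H φ) (e : Bool) : IsInflation (tw e G) (tw e H) φ := by
  refine ⟨h.1, fun x y hxy => ?_⟩
  have : x ≠ y := fun hh => hxy (congrArg φ hh)
  simp [tw_adj, h.2 x y hxy, hxy, this]

/-! ### Finding universal quasi-threshold graphs -/

lemma join_embedding {V W : Type} {E : SimpleGraph V} {Q : SimpleGraph W} (f : Q ↪g E) (w : V)
    (hw : ∀ x, E.Adj w (f x)) : ∃ F : GJoin (⊥ : SimpleGraph (Fin 1)) Q ↪g E,
      ∀ x, F x = w ∨ ∃ y, F x = f y := by
  refine ⟨⟨⟨Sum.elim (fun _ => w) f, ?_⟩, ?_⟩, ?_⟩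
  · rintro (x | x) (y | y) hxy
    · rw [Subsingleton.elim x y]
    · exact absurd hxy (hw y).ne
    · exact absurd hxy (hw x).ne'
    · exact congrArg Sum.inr (f.injective hxy)
  · rintro (x | x) (y | y)
    · simp [GJoin, Subsingleton.elim x y]
    · change E.Adj w (f y) ↔ _
      simpa [GJoin] using hw y
    · change E.Adj (f x) w ↔ _
      simpa [GJoin] using (hw x).symm
    · change E.Adj (f x) (f y) ↔ _
      by_cases hxy : x = y
      · simp [hxy]
      · simp [GJoin, hxy]
  · rintro (x | x)
    · exact Or.inl rfl
    · exact Or.inr ⟨x, rfl⟩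

lemma QGraph_succ_embedding {V : Type} {E : SimpleGraph V} {a : ℕ}
    (f : GJoin (⊥ : SimpleGraph (Fin 1)) (QGraph a) ↪g E) (g : QGraph a ↪g E)
    (hne : ∀ x y, f x ≠ g y) (hadj : ∀ x y, ¬ E.Adj (f x) (g y)) :
    Nonempty (QGraph (a + 1) ↪g E) := by
  have : Nonempty ((GJoin (⊥ : SimpleGraph (Fin 1)) (QGraph a)) ⊕g (QGraph a) ↪g E) := by
    refine ⟨⟨⟨Sum.elim f g, ?_⟩, ?_⟩⟩
    · rintro (x | x) (y | y) hxy
      · exact congrArg Sum.inl (f.injective hxy)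
      · exact absurd hxy (hne x y)
      · exact absurd hxy.symm (hne y x)
      · exact congrArg Sum.inr (g.injective hxy)
    · rintro (x | x) (y | y)
      · change E.Adj (f x) (f y) ↔ _
        simp
      · change E.Adj (f x) (g y) ↔ _
        simpa using hadj x y
      · change E.Adj (g x) (f y) ↔ _
        simpa using fun h => hadj y x h.symm
      · change E.Adj (g x) (g y) ↔ _
        simp
  exact this

/-- Two nonadjacent fibers containing `Q_{a+1}`, told apart by a third one, give `Q_{a+2}`
(in the indexing of `QGraph`: from `a` to `a + 1`). -/
lemma QGraph_of_two_fibers {V ι : Type} {E : SimpleGraph V} {H : SimpleGraph ι} {φ : V → ι}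
    (h : IsInflation E H φ) {a : ℕ} {u v w : ι} (huv : u ≠ v) (hadj : ¬ H.Adj u v)
    (hwu : H.Adj w u) (hwv : w ≠ v) (hwv' : ¬ H.Adj w v)
    (f : QGraph a ↪g E.induce (φ ⁻¹' {u})) (g : QGraph a ↪g E.induce (φ ⁻¹' {v})) :
    Nonempty (QGraph (a + 1) ↪g E) := by
  obtain ⟨z, rfl⟩ := h.1 w
  have hf : ∀ x, φ (f x) = u := fun x => (f x).2
  have hg : ∀ x, φ (g x) = v := fun x => (g x).2
  let f' : QGraph a ↪g E := f.trans (SimpleGraph.Embedding.induce _)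
  let g' : QGraph a ↪g E := g.trans (SimpleGraph.Embedding.induce _)
  have hz : ∀ x, E.Adj z (f' x) := fun x =>
    (h.2 z (f x) (by rw [hf]; exact hwu.ne)).mpr (by rw [hf]; exact hwu)
  obtain ⟨F, hFx⟩ := join_embedding f' z hz
  have hF : ∀ x, φ (F x) = φ z ∨ φ (F x) = u := by
    intro x
    rcases hFx x with hx | ⟨y, hx⟩
    · exact Or.inl (congrArg φ hx)
    · exact Or.inr ((congrArg φ hx).trans (hf y))
  have hg' : ∀ y, φ (g' y) = v := hg
  have hFg : ∀ x y, φ (F x) ≠ φ (g' y) := by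
    intro x y
    rw [hg']
    rcases hF x with hx | hx <;> rw [hx]
    · exact hwv
    · exact huv
  refine QGraph_succ_embedding F g' (fun x y hxy => hFg x y (congrArg φ hxy)) (fun x y => ?_)
  rw [h.2 _ _ (hFg x y), hg']
  rcases hF x with hx | hx <;> rw [hx]
  · exact hwv'
  · exact hadj

/-! ### The two cases of the induction -/

lemma exists_crossing {V : Type} {E : SimpleGraph V} (hE : E.Preconnected) (S : Set V)
    {x y : V} (hx : x ∈ S) (hy : y ∉ S) : ∃ u ∈ S, ∃ v ∉ S, E.Adj u v := by
  obtain ⟨p⟩ := hE x y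
  obtain ⟨d, -, h1, h2⟩ := p.exists_boundary_dart S hx hy
  exact ⟨_, h1, _, h2, d.adj⟩

/-- If `tw e F` is connected and does not contain `K_1 ∗ Q`, where `Q = QGraph a`, then every fiber
over a prime quotient avoids `Q` in `tw e F`, since it is completely joined to another fiber. -/
lemma lcwLE_of_connected {W : Type} [Finite W] {F : SimpleGraph W} {e : Bool} {a k m : ℕ}
    (hk2 : 2 ≤ k) (hconn : (tw e F).Preconnected)
    (hk : ∀ (U : Type) [Finite U] (F' : SimpleGraph U), Nonempty (F' ↪g F) →
      ¬ Nonempty (QGraph a ↪g tw e F') → lcwLE F' k)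
    (hP : ∀ (U : Type) [Finite U] (H : SimpleGraph U), Nonempty (H ↪g F) → IsPrime H →
      lcwLE H m)
    (hJ : ¬ Nonempty (GJoin (⊥ : SimpleGraph (Fin 1)) (QGraph a) ↪g tw e F)) :
    lcwLE F (m + k) := by
  rcases subsingleton_or_nontrivial W with hW | hW
  · refine (lcwLE_two False fun x y => ?_).mono (by omega : 2 ≤ m + k)
    simp [Subsingleton.elim x y]
  · obtain ⟨κ, K, φ, hκ, hφ, hK⟩ := exists_prime_quotient _ F rfl
    refine lcwLE_inflation hφ (hP κ K hφ.embedding hK) (fun i => ?_)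
    refine hk _ _ ⟨SimpleGraph.Embedding.induce _⟩ ?_
    rintro ⟨f⟩
    rw [tw_induce] at f
    have : Nontrivial κ := Finite.one_lt_card_iff_nontrivial.mp hK.1
    obtain ⟨j, hj⟩ := exists_ne i
    obtain ⟨x, rfl⟩ := hφ.1 i
    obtain ⟨y, rfl⟩ := hφ.1 j
    obtain ⟨u, hu, v, hv, huv⟩ := exists_crossing hconn (φ ⁻¹' {φ x}) (x := x) (y := y) rfl hj
    have hu' : φ u = φ x := hu
    have hv' : φ v ≠ φ x := hv
    refine hJ (Exists.nonempty
      (join_embedding (f.trans (SimpleGraph.Embedding.induce _)) v fun z => ?_))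
    have hz : φ (f z) = φ x := (f z).2
    have hi := hφ.tw e
    have h1 := (hi.2 u v (by rw [hu']; exact hv'.symm)).mp huv
    refine (hi.2 v (f z) (by rw [hz]; exact hv')).mpr ?_
    rw [hz, ← hu']
    exact h1.symm

/-- The case in which `E = tw e G` is disconnected. If some component of `E` contains `K_1 ∗ Q`,
where `Q = QGraph a`, then the rest of `E` avoids `Q`, and that component is built first.
Otherwise `lcwLE_of_connected` bounds every component, and `G` is an inflation of an edgeless or
complete graph by them. -/
lemma lcwLE_of_disconnected {V : Type} [Finite V] {G : SimpleGraph V} {e : Bool} {a k m : ℕ}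
    (hk2 : 2 ≤ k) (hconn : ¬ (tw e G).Preconnected)
    (hk : ∀ (U : Type) [Finite U] (F : SimpleGraph U), Nonempty (F ↪g G) →
      ¬ Nonempty (QGraph a ↪g tw e F) → lcwLE F k)
    (hK : ∀ (U : Type) [Finite U] (F : SimpleGraph U), Nonempty (F ↪g G) →
      Nat.card U < Nat.card V → lcwLE F (m + 2 + k))
    (hP : ∀ (U : Type) [Finite U] (H : SimpleGraph U), Nonempty (H ↪g G) → IsPrime H →
      lcwLE H m)
    (hQ : ¬ Nonempty (QGraph (a + 1) ↪g tw e G)) :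
    lcwLE G (m + 2 + k) := by
  set E := tw e G with hE
  have hGE : ∀ x y, x ≠ y → ¬ E.Adj x y → (G.Adj x y ↔ e = false) := by
    intro x y hxy h
    rw [hE, tw_adj] at h
    cases e <;> simp_all
  by_cases hJ : ∃ c : E.ConnectedComponent,
      Nonempty (GJoin (⊥ : SimpleGraph (Fin 1)) (QGraph a) ↪g E.induce c.supp)
  · obtain ⟨c, ⟨f⟩⟩ := hJ
    have hcne : c.supp ≠ Set.univ := by
      intro hc
      refine hconn fun x y => ?_
      have hx : x ∈ c.supp := hc ▸ Set.mem_univ x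
      have hy : y ∈ c.supp := hc ▸ Set.mem_univ y
      exact c.reachable_of_mem_supp hx hy
    obtain ⟨y₀, hy₀⟩ := (Set.ne_univ_iff_exists_notMem _).mp hcne
    obtain ⟨x₀, hx₀⟩ := c.nonempty_supp
    let H : SimpleGraph Bool := if e then ⊥ else ⊤
    have hHadj : ∀ p q : Bool, p ≠ q → (H.Adj p q ↔ e = false) := by
      intro p q hpq
      cases e <;> simp [H, hpq]
    have hφ : IsInflation G H (fun x => decide (x ∈ c.supp)) := by
      refine ⟨?_, fun x y hxy => ?_⟩
      · rintro (_ | _)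
        · exact ⟨y₀, by simpa using hy₀⟩
        · exact ⟨x₀, by simpa using hx₀⟩
      · have hxy' : ¬ (x ∈ c.supp ↔ y ∈ c.supp) := by simpa using hxy
        rw [hHadj _ _ hxy]
        refine hGE x y (by rintro rfl; exact hxy' Iff.rfl) (fun h => hxy' ?_)
        exact c.mem_supp_congr_adj h
    have hHp : IsPrime H := by
      refine ⟨by simp, fun M _ => ?_⟩
      by_cases hs : M.Subsingleton
      · exact Or.inl hs
      · obtain ⟨p, hp, q, hq, hpq⟩ := Set.not_subsingleton_iff.mp hs
        refine Or.inr (Set.eq_univ_of_forall fun r => ?_)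
        have : r = p ∨ r = q := by cases p <;> cases q <;> cases r <;> simp_all
        rcases this with rfl | rfl <;> assumption
    refine lcwLE_inflation_special hφ (k := k) (hP Bool H hφ.embedding hHp) true ?_ ?_ (by omega)
    · refine hK _ _ ⟨SimpleGraph.Embedding.induce _⟩ ?_
      rw [← Set.ncard_univ V, Nat.card_coe_set_eq]
      refine Set.ncard_lt_ncard ⟨Set.subset_univ _, fun hh => hy₀ ?_⟩
      simpa using hh (Set.mem_univ y₀)
    · intro i hi
      refine hk _ _ ⟨SimpleGraph.Embedding.induce _⟩ ?_
      rintro ⟨g⟩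
      rw [tw_induce] at g
      have hg : ∀ y, (g y : V) ∉ c.supp := by
        intro y hy
        have h1 : decide ((g y : V) ∈ c.supp) = i := (g y).2
        exact hi (h1 ▸ decide_eq_true hy)
      refine hQ (QGraph_succ_embedding (f.trans (SimpleGraph.Embedding.induce _))
        (g.trans (SimpleGraph.Embedding.induce _)) (fun x y hxy => hg y ?_) (fun x y hxy => hg y ?_))
      · have h1 : (f x : V) = g y := hxy
        exact h1 ▸ (f x).2
      · have h1 : E.Adj (f x) (g y) := hxy
        exact (c.mem_supp_congr_adj h1).mp (f x).2
  · let H : SimpleGraph E.ConnectedComponent := if e then ⊥ else ⊤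
    have hHadj : ∀ p q, H.Adj p q ↔ p ≠ q ∧ e = false := by
      intro p q
      cases e <;> simp [H]
    have hφ : IsInflation G H E.connectedComponentMk := by
      refine ⟨Quot.mk_surjective, fun x y hxy => ?_⟩
      rw [hHadj]
      have hne : x ≠ y := fun h => hxy (congrArg _ h)
      rw [hGE x y hne fun h => hxy (SimpleGraph.ConnectedComponent.sound h.reachable)]
      simp [hxy]
    have : Finite E.ConnectedComponent := Finite.of_surjective _ hφ.1
    refine (lcwLE_inflation (k := m + k) hφ (lcwLE_two _ hHadj) fun c => ?_).mono
      (by omega : 2 + (m + k) ≤ m + 2 + k)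
    have hind : ∀ {U : Type} {F : SimpleGraph U},
        Nonempty (F ↪g G.induce (E.connectedComponentMk ⁻¹' {c})) → Nonempty (F ↪g G) :=
      fun ⟨f⟩ => ⟨f.trans (SimpleGraph.Embedding.induce _)⟩
    refine lcwLE_of_connected (e := e) (a := a) hk2 ?_ (fun U _ F hF => hk U F (hind hF))
      (fun U _ F hF => hP U F (hind hF)) ?_
    · rw [tw_induce]
      exact c.maximal_connected_induce_supp.1.preconnected
    · rw [tw_induce]
      exact fun h => hJ ⟨c, h⟩

/-- Two vertices of a prime graph that no third vertex distinguishes form a module, hence are the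
only vertices. -/
lemma IsPrime.distinguish {ι : Type} {H : SimpleGraph ι} (hH : IsPrime H) {u v : ι}
    (huv : u ≠ v) (h : ∀ w, w ≠ u → w ≠ v → (H.Adj w u ↔ H.Adj w v)) : ∀ w, w = u ∨ w = v := by
  have hM : IsModule H {u, v} := by
    rintro x hx y hy w hw
    simp only [Set.mem_insert_iff, Set.mem_singleton_iff, not_or] at hx hy hw
    have := h w hw.1 hw.2
    rcases hx with rfl | rfl <;> rcases hy with rfl | rfl <;> simp [this]
  rcases hH.2 _ hM with hs | hs
  · exact absurd (hs (Set.mem_insert u {v}) (Set.mem_insert_of_mem u rfl)) huv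
  · intro w
    simpa using hs.ge (Set.mem_univ w)

/-- If `G` and its complement are connected, then over a prime quotient two fibers cannot both
contain `QGraph a` as well as the complement of `QGraph b`, so at most one fiber is expensive. -/
lemma lcwLE_of_biconnected {V : Type} [Finite V] [Nontrivial V] {G : SimpleGraph V}
    {a b k m : ℕ} (hconn : ∀ e, (tw e G).Preconnected)
    (hk : ∀ (U : Type) [Finite U] (F : SimpleGraph U), Nonempty (F ↪g G) →
      ¬ (Nonempty (QGraph a ↪g tw true F) ∧ Nonempty (QGraph b ↪g tw false F)) → lcwLE F k)
    (hK : ∀ (U : Type) [Finite U] (F : SimpleGraph U), Nonempty (F ↪g G) →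
      Nat.card U < Nat.card V → lcwLE F (m + 2 + k))
    (hP : ∀ (U : Type) [Finite U] (H : SimpleGraph U), Nonempty (H ↪g G) → IsPrime H →
      lcwLE H m)
    (hQa : ¬ Nonempty (QGraph (a + 1) ↪g tw true G))
    (hQb : ¬ Nonempty (QGraph (b + 1) ↪g tw false G)) :
    lcwLE G (m + 2 + k) := by
  obtain ⟨κ, K, φ, hκ, hφ, hKp⟩ := exists_prime_quotient _ G rfl
  have : Nontrivial κ := Finite.one_lt_card_iff_nontrivial.mp hKp.1
  -- two fibers which are nonadjacent in `tw e G` cannot both contain `QGraph c`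
  have key : ∀ (e : Bool) (c : ℕ), ¬ Nonempty (QGraph (c + 1) ↪g tw e G) → ∀ u v : κ, u ≠ v →
      ¬ (tw e K).Adj u v → Nonempty (QGraph c ↪g tw e (G.induce (φ ⁻¹' {u}))) →
      Nonempty (QGraph c ↪g tw e (G.induce (φ ⁻¹' {v}))) → False := by
    rintro e c hQ u v huv hadj ⟨f⟩ ⟨g⟩
    rw [tw_induce] at f g
    have hi := hφ.tw e
    by_cases hw : ∃ w, w ≠ u ∧ w ≠ v ∧ ¬ (K.Adj w u ↔ K.Adj w v)
    · obtain ⟨w, hwu, hwv, hw⟩ := hw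
      have h' : ¬ ((tw e K).Adj w u ↔ (tw e K).Adj w v) := by
        simp only [tw_adj, ne_eq, hwu, hwv, not_false_eq_true, true_and]
        tauto
      by_cases h1 : (tw e K).Adj w u
      · exact hQ (QGraph_of_two_fibers hi huv hadj h1 hwv (by tauto) f g)
      · exact hQ (QGraph_of_two_fibers hi huv.symm (fun h => hadj h.symm)
          (by tauto : (tw e K).Adj w v) hwu h1 g f)
    · have hall := hKp.distinguish huv (fun w h1 h2 => by
        by_contra h3
        exact hw ⟨w, h1, h2, h3⟩)
      obtain ⟨x, hx⟩ := hφ.1 u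
      obtain ⟨y, hy⟩ := hφ.1 v
      obtain ⟨p, hp, q, hq, hpq⟩ := exists_crossing (hconn e) (φ ⁻¹' {u}) (x := x) (y := y) hx
        (fun h => huv ((Eq.symm h).trans hy))
      have hp' : φ p = u := hp
      have hq' : φ q = v := (hall (φ q)).resolve_left hq
      apply hadj
      have := (hi.2 p q (by rw [hp', hq']; exact huv)).mp hpq
      rwa [hp', hq'] at this
  obtain ⟨v₀, hv₀⟩ : ∃ v₀ : κ, ∀ v, v ≠ v₀ →
      ¬ (Nonempty (QGraph a ↪g tw true (G.induce (φ ⁻¹' {v}))) ∧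
        Nonempty (QGraph b ↪g tw false (G.induce (φ ⁻¹' {v})))) := by
    by_contra hcon
    push Not at hcon
    obtain ⟨u, -, hu1, hu2⟩ := hcon (Classical.arbitrary κ)
    obtain ⟨v, hvu, hv1, hv2⟩ := hcon u
    by_cases hadj : K.Adj u v
    · exact key false b hQb u v hvu.symm (by simp [tw_adj, hadj]) hu2 hv2
    · exact key true a hQa u v hvu.symm (by simp [tw_adj, hadj]) hu1 hv1
  refine lcwLE_inflation_special hφ (k := k) (hP κ K hφ.embedding hKp) v₀ ?_
    (fun i hi => hk _ _ ⟨SimpleGraph.Embedding.induce _⟩ (hv₀ i hi)) (by omega)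
  refine hK _ _ ⟨SimpleGraph.Embedding.induce _⟩ ?_
  rw [← Set.ncard_univ V, Nat.card_coe_set_eq]
  refine Set.ncard_lt_ncard ⟨Set.subset_univ _, fun hh => ?_⟩
  obtain ⟨j, hj⟩ := exists_ne v₀
  obtain ⟨y, rfl⟩ := hφ.1 j
  exact hj (hh (Set.mem_univ y))

/-! ### The main induction -/

/-- A graph avoiding `Q_{a+1}` and the complement of `Q_{b+1}`, all of whose prime induced
subgraphs have linear clique-width at most `m`, has linear clique-width at most `(m+2)(a+b)`. -/
lemma lcwLE_core (m n : ℕ) : ∀ (a b : ℕ) (V : Type) [Finite V] (G : SimpleGraph V),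
    a + b + Nat.card V = n →
    (∀ (U : Type) [Finite U] (H : SimpleGraph U), Nonempty (H ↪g G) → IsPrime H → lcwLE H m) →
    ¬ Nonempty (QGraph a ↪g tw true G) → ¬ Nonempty (QGraph b ↪g tw false G) →
    lcwLE G ((m + 2) * (a + b)) := by
  induction n using Nat.strong_induction_on with
  | _ n ih =>
    intro a b V _ G hn hP hQa hQb
    have hsingle : ∀ {E : SimpleGraph V}, Nonempty V → Nonempty (QGraph 0 ↪g E) := by
      rintro E ⟨v⟩
      have hsub : Subsingleton (QVert 0) := inferInstanceAs (Subsingleton (Fin 1))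
      exact ⟨⟨⟨fun _ => v, fun x y _ => Subsingleton.elim x y⟩, by
        intro x y; simp [Subsingleton.elim x y]⟩⟩
    rcases isEmpty_or_nonempty V with hV | hV
    · refine lcwLE_of_bld (ℓ := fun x => (hV.false x).elim) (.base ⟨?_, ?_⟩)
      · exact Set.eq_empty_of_isEmpty _
      · ext x; exact (hV.false x).elim
    obtain ⟨a, rfl⟩ := Nat.exists_eq_succ_of_ne_zero (n := a)
      (by rintro rfl; exact hQa (hsingle hV))
    obtain ⟨b, rfl⟩ := Nat.exists_eq_succ_of_ne_zero (n := b)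
      (by rintro rfl; exact hQb (hsingle hV))
    simp only [Nat.succ_eq_add_one] at *
    have hk : (m + 2) * (a + 1 + (b + 1)) = m + 2 + (m + 2) * (a + b + 1) := by ring
    have hk2 : 2 ≤ (m + 2) * (a + b + 1) := by nlinarith
    rw [hk]
    have hcard : ∀ (U : Type) [Finite U] (F : SimpleGraph U), Nonempty (F ↪g G) →
        Nat.card U ≤ Nat.card V := fun U _ F ⟨f⟩ => Nat.card_le_card_of_injective f f.injective
    have hPsub : ∀ (U : Type) [Finite U] (F : SimpleGraph U), Nonempty (F ↪g G) →
        ∀ (U' : Type) [Finite U'] (H : SimpleGraph U'), Nonempty (H ↪g F) → IsPrime H →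
          lcwLE H m := fun U _ F ⟨f⟩ U' _ H ⟨g⟩ => hP U' H ⟨g.trans f⟩
    have hsub : ∀ (e : Bool) (c : ℕ) (U : Type) (F : SimpleGraph U), Nonempty (F ↪g G) →
        ¬ Nonempty (QGraph c ↪g tw e G) → ¬ Nonempty (QGraph c ↪g tw e F) := by
      rintro e c U F ⟨f⟩ h ⟨g⟩
      obtain ⟨f'⟩ := tw_embedding e f
      exact h ⟨g.trans f'⟩
    have hka : ∀ (U : Type) [Finite U] (F : SimpleGraph U), Nonempty (F ↪g G) →
        ¬ Nonempty (QGraph a ↪g tw true F) → lcwLE F ((m + 2) * (a + b + 1)) := by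
      intro U _ F hF hQ
      have := hcard U F hF
      exact ih (a + (b + 1) + Nat.card U) (by omega) a (b + 1) U F rfl (hPsub U F hF) hQ
        (hsub _ _ U F hF hQb)
    have hkb : ∀ (U : Type) [Finite U] (F : SimpleGraph U), Nonempty (F ↪g G) →
        ¬ Nonempty (QGraph b ↪g tw false F) → lcwLE F ((m + 2) * (a + b + 1)) := by
      intro U _ F hF hQ
      have := hcard U F hF
      rw [show a + b + 1 = a + 1 + b by ring]
      exact ih (a + 1 + b + Nat.card U) (by omega) (a + 1) b U F rfl (hPsub U F hF)
        (hsub _ _ U F hF hQa) hQ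
    have hK : ∀ (U : Type) [Finite U] (F : SimpleGraph U), Nonempty (F ↪g G) →
        Nat.card U < Nat.card V → lcwLE F (m + 2 + (m + 2) * (a + b + 1)) := by
      intro U _ F hF hlt
      rw [← hk]
      exact ih (a + 1 + (b + 1) + Nat.card U) (by omega) (a + 1) (b + 1) U F rfl (hPsub U F hF)
        (hsub _ _ U F hF hQa) (hsub _ _ U F hF hQb)
    by_cases hct : (tw true G).Preconnected
    · by_cases hcf : (tw false G).Preconnected
      · rcases subsingleton_or_nontrivial V with hV1 | hV1
        · refine (lcwLE_two False fun x y => ?_).mono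
            (by omega : 2 ≤ m + 2 + (m + 2) * (a + b + 1))
          simp [Subsingleton.elim x y]
        · refine lcwLE_of_biconnected (by rintro (_ | _) <;> assumption) ?_ hK hP hQa hQb
          intro U _ F hF hnot
          by_cases hQ : Nonempty (QGraph a ↪g tw true F)
          · exact hkb U F hF fun h => hnot ⟨hQ, h⟩
          · exact hka U F hF hQ
      · exact lcwLE_of_disconnected hk2 hcf hkb hK hP hQb
    · exact lcwLE_of_disconnected hk2 hct hka hK hP hQa

instance QVert.instFinite : ∀ n, Finite (QVert n)
  | 0 => inferInstanceAs (Finite (Fin 1))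
  | n + 1 =>
    have := QVert.instFinite n
    inferInstanceAs (Finite ((Fin 1 ⊕ QVert n) ⊕ QVert n))

/-- A finite graph embedding into a member of a hereditary class has a copy in that class. -/
lemma exists_copy_mem {C : ∀ n : ℕ, Set (SimpleGraph (Fin n))} (hC : Hereditary C) {n : ℕ}
    {G : SimpleGraph (Fin n)} (hG : G ∈ C n) {U : Type} [Finite U] {H : SimpleGraph U}
    (hH : Nonempty (H ↪g G)) :
    ∃ (k : ℕ) (H' : SimpleGraph (Fin k)), H' ∈ C k ∧ Nonempty (H' ≃g H) := by
  obtain ⟨f⟩ := hH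
  let i := SimpleGraph.Iso.comap (Finite.equivFin U).symm H
  exact ⟨_, _, hC _ G ⟨i.toEmbedding.trans f⟩ hG, ⟨i⟩⟩

lemma IsPrime.of_iso {V W : Type} {G : SimpleGraph V} {H : SimpleGraph W} (hG : IsPrime G)
    (f : H ≃g G) : IsPrime H := by
  refine ⟨by rw [Nat.card_congr f.toEquiv]; exact hG.1, fun M hM => ?_⟩
  have hM' : IsModule G (f '' M) := by
    rintro _ ⟨u, hu, rfl⟩ _ ⟨v, hv, rfl⟩ w hw
    obtain ⟨w, rfl⟩ := f.surjective w
    simp only [f.map_adj_iff]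
    exact hM u hu v hv w fun h => hw ⟨w, h, rfl⟩
  rcases hG.2 _ hM' with h | h
  · exact Or.inl fun x hx y hy => f.injective (h ⟨x, hx, rfl⟩ ⟨y, hy, rfl⟩)
  · refine Or.inr (Set.eq_univ_of_forall fun x => ?_)
    obtain ⟨y, hy, hyx⟩ := h.ge (Set.mem_univ (f x))
    exact f.injective hyx ▸ hy

/-- If every prime graph in a hereditary class `C` has linear
clique-width at most `m`, and `Q_t ∉ C` and `Q̄_s ∉ C` (for some `t, s ≥ 1`), then every
graph in `C` has linear clique-width less than `(m + 2)(t + s)`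
(here `QGraph (t - 1)` is `Q_t` and `(QGraph (s - 1))ᶜ` is `Q̄_s`). -/
theorem hereditary_lcw_lt (C : ∀ n : ℕ, Set (SimpleGraph (Fin n))) (hC : Hereditary C)
    (m t s : ℕ) (ht : 1 ≤ t) (hs : 1 ≤ s)
    (hprime : ∀ n : ℕ, ∀ G ∈ C n, IsPrime G → lcw G ≤ m)
    (hQt : ∀ n : ℕ, ∀ G ∈ C n, ¬ Nonempty (G ≃g QGraph (t - 1)))
    (hQs : ∀ n : ℕ, ∀ G ∈ C n, ¬ Nonempty (G ≃g (QGraph (s - 1))ᶜ)) :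
    ∀ n : ℕ, ∀ G ∈ C n, lcw G < (m + 2) * (t + s) := by
  intro n G hG
  have hcore : lcwLE G ((m + 2) * (t - 1 + (s - 1))) := by
    refine lcwLE_core m _ (t - 1) (s - 1) (Fin n) G rfl ?_ ?_ ?_
    · intro U _ H hH hHp
      obtain ⟨k, H', hH', ⟨f⟩⟩ := exists_copy_mem hC hG hH
      exact (lcwLE_of_lcw_le (hprime k H' hH' (hHp.of_iso f))).iso f
    · intro h
      obtain ⟨k, H', hH', hf⟩ := exists_copy_mem hC hG (H := QGraph (t - 1)) h
      exact hQt k H' hH' hf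
    · rintro ⟨f⟩
      obtain ⟨k, H', hH', hf⟩ := exists_copy_mem hC hG (H := (QGraph (s - 1))ᶜ)
        (by
          obtain ⟨g⟩ := tw_embedding false f
          exact ⟨by simpa [tw] using g⟩)
      exact hQs k H' hH' hf
  refine (Nat.sInf_le hcore).trans_lt ?_
  exact Nat.mul_lt_mul_of_pos_left (by omega) (by omega)
end

section
/- A finite graph is a quasi-threshold graph if and only if it contains no induced subgraph isomorphic to the path P_4 on four vertices and no induced subgraph isomorphic to the cycle C_4 on four vertices. -/
/-!
A graph has neither an induced `P₄` nor an induced `C₄` exactly when every walk `a, b, c, d` with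
`a ≠ c` and `b ≠ d` has one of the chords `ac`, `bd`; whether `a` and `d` are adjacent only decides
which of the two forbidden graphs occurs. This chord condition (`ChordedPaths`) is preserved by
joins with `K₁` and by disjoint unions, so quasi-threshold graphs satisfy it (`IsQT.chordedPaths`).

Conversely, induct on the number of vertices. If the vertex set splits into two nonempty parts with
no edge between them, then the graph is the disjoint union of the two induced subgraphs. Otherwise
a vertex `v` of maximum degree is adjacent to all others (`exists_dominating`): if not, some edge
`wu` leaves the closed neighbourhood of `v`, and for every neighbour `x ≠ w` of `v` the walk
`x, v, w, u` forces `x` to be adjacent to `w`; so the closed neighbourhood of `w` contains that of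
`v` and also `u`, contradicting maximality. Hence the graph is the join of `K₁` with the rest.
-/

open scoped Classical

/-! ### Quasi-threshold graphs and the chord condition -/

/-- Every walk `a, b, c, d` with `a ≠ c` and `b ≠ d` has a chord `ac` or `bd`. Here `a = d` is not
excluded, but then `ac` is the edge `cd` and there is nothing to check. -/
def ChordedPaths {V : Type} (G : SimpleGraph V) : Prop :=
  ∀ a b c d, G.Adj a b → G.Adj b c → G.Adj c d → a ≠ c → b ≠ d → G.Adj a c ∨ G.Adj b d

theorem GJoin_adj {α β : Type} (G : SimpleGraph α) (H : SimpleGraph β) (x y : α ⊕ β) :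
    (GJoin G H).Adj x y ↔
      match x, y with
      | .inl a, .inl b => G.Adj a b
      | .inr a, .inr b => H.Adj a b
      | _, _ => True := by
  rcases x with x | x <;> rcases y with y | y <;> simp [GJoin]
  · exact ⟨fun h => by tauto, fun h => ⟨h.ne, fun _ => h⟩⟩
  · exact ⟨fun h => by tauto, fun h => ⟨h.ne, fun _ => h⟩⟩

theorem ChordedPaths.of_embedding {V W : Type} {G : SimpleGraph V} {H : SimpleGraph W}
    (f : G ↪g H) (h : ChordedPaths H) : ChordedPaths G := by
  intro a b c d hab hbc hcd hac hbd
  simpa using h (f a) (f b) (f c) (f d) (by simpa) (by simpa) (by simpa)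
    (by simpa using hac) (by simpa using hbd)

theorem chordedPaths_iff {V : Type} (G : SimpleGraph V) :
    ChordedPaths G ↔
      (¬ Nonempty (SimpleGraph.pathGraph 4 ↪g G) ∧
        ¬ Nonempty (SimpleGraph.cycleGraph 4 ↪g G)) := by
  constructor
  · intro h
    constructor
    · rintro ⟨f⟩
      have := ChordedPaths.of_embedding f h 0 1 2 3
      simp [SimpleGraph.pathGraph_adj] at this
    · rintro ⟨f⟩
      have := ChordedPaths.of_embedding f h 0 1 2 3
      revert this
      simp [SimpleGraph.cycleGraph_adj]
      decide
  · rintro ⟨hP, hC⟩ a b c d hab hbc hcd hac hbd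
    by_contra! hn
    have had : a ≠ d := by rintro rfl; exact hn.1 hcd.symm
    have hinj : Function.Injective ![a, b, c, d] := by
      intro i j
      have := hab.ne; have := hbc.ne; have := hcd.ne
      fin_cases i <;> fin_cases j <;> simp <;> grind
    have h1 := hn.1
    have h2 := hn.2
    by_cases hda : G.Adj a d
    · refine hC ⟨⟨⟨![a, b, c, d], hinj⟩, ?_⟩⟩
      intro i j
      fin_cases i <;> fin_cases j <;>
        simp [SimpleGraph.cycleGraph_adj, hab, hbc, hcd, h1, h2, hda, G.adj_comm b a,
          G.adj_comm c b, G.adj_comm d c, G.adj_comm c a, G.adj_comm d b, G.adj_comm d a] <;> decide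
    · refine hP ⟨⟨⟨![a, b, c, d], hinj⟩, ?_⟩⟩
      intro i j
      fin_cases i <;> fin_cases j <;>
        simp [SimpleGraph.pathGraph_adj, hab, hbc, hcd, h1, h2, hda, G.adj_comm b a,
          G.adj_comm c b, G.adj_comm d c, G.adj_comm c a, G.adj_comm d b, G.adj_comm d a]

theorem IsQT.chordedPaths {V : Type} {G : SimpleGraph V} (h : IsQT G) : ChordedPaths G := by
  induction h with
  | single => intro a b c d hab; simp at hab
  | joinK1 _ ih =>
    rintro (a | a) (b | b) (c | c) (d | d) <;> simp only [GJoin_adj] <;>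
      simp
    all_goals first | exact ih a b c d | grind
  | union _ _ ih1 ih2 =>
    rintro (a | a) (b | b) (c | c) (d | d) <;> simp
    · exact ih1 a b c d
    · exact ih2 a b c d
  | iso _ e ih => exact ih.of_embedding e.some.symm.toEmbedding

/-- A finite graph with the chord condition that is connected, in the sense that every nonempty
proper vertex set is left by an edge, has a dominating vertex. -/
theorem exists_dominating {V : Type} [Finite V] [Nonempty V] {G : SimpleGraph V}
    (h : ChordedPaths G)
    (hconn : ∀ S : Set V, S.Nonempty → Sᶜ.Nonempty → ∃ x ∈ S, ∃ y ∈ Sᶜ, G.Adj x y) :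
    ∃ v, ∀ w, w ≠ v → G.Adj v w := by
  obtain ⟨v, hv⟩ := Finite.exists_max fun v => (insert v (G.neighborSet v)).ncard
  refine ⟨v, ?_⟩
  by_contra! hn
  obtain ⟨z, hzv, hz⟩ := hn
  obtain ⟨w, hw, u, hu, hwu⟩ := hconn (insert v (G.neighborSet v)) ⟨v, by simp⟩ ⟨z, by simp [*]⟩
  simp only [Set.mem_compl_iff, Set.mem_insert_iff, SimpleGraph.mem_neighborSet, not_or] at hu hw
  have hvw : G.Adj v w := by
    rcases hw with rfl | hw
    · exact absurd hwu hu.2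
    · exact hw
  refine absurd (hv w) (not_le.2 (Set.ncard_lt_ncard ?_ (Set.toFinite _)))
  refine (Set.ssubset_iff_of_subset ?_).2 ⟨u, by simp [hwu], by simp [hu]⟩
  rintro x (rfl | hx)
  · exact Or.inr hvw.symm
  · by_cases hxw : x = w
    · exact Or.inl hxw
    · have := h x v w u hx.symm hvw hwu hxw (Ne.symm hu.1)
      exact Or.inr (this.resolve_right hu.2).symm

theorem ChordedPaths.isQT {V : Type} [Finite V] [Nonempty V] {G : SimpleGraph V}
    (h : ChordedPaths G) : IsQT G := by
  induction hn : Nat.card V using Nat.strong_induction_on generalizing V with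
  | _ n ih =>
  subst hn
  have key : ∀ S : Set V, S.Nonempty → Sᶜ.Nonempty → IsQT (G.induce S) := by
    intro S hS hS'
    have : Nonempty S := hS.to_subtype
    refine ih _ ?_ (h.of_embedding (SimpleGraph.Embedding.induce S)) rfl
    obtain ⟨x, hx⟩ := hS'
    exact Finite.card_subtype_lt hx
  by_cases hconn : ∀ S : Set V, S.Nonempty → Sᶜ.Nonempty → ∃ x ∈ S, ∃ y ∈ Sᶜ, G.Adj x y
  · obtain ⟨v, hv⟩ := exists_dominating h hconn
    by_cases hs : ∃ w, w ≠ v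
    · obtain ⟨w, hw⟩ := hs
      have hq := key {v}ᶜ ⟨w, hw⟩ ⟨v, by simp⟩
      refine .iso hq.joinK1 ⟨⟨((Equiv.ofUnique (Fin 1) ({v} : Set V)).sumCongr
        (Equiv.refl _)).trans (Equiv.Set.sumCompl ({v} : Set V)), ?_⟩⟩
      rintro (a | a) (b | b)
      · simp [GJoin_adj]
      · simpa [GJoin_adj] using hv b b.2
      · simpa [GJoin_adj] using (hv a a.2).symm
      · simp [GJoin_adj]
    · push Not at hs
      have : Unique V := ⟨⟨v⟩, hs⟩
      refine .iso .single ⟨⟨Equiv.ofUnique (Fin 1) V, ?_⟩⟩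
      intro a b
      simp
  · push Not at hconn
    obtain ⟨S, hS, hS', hno⟩ := hconn
    refine .iso ((key S hS hS').union (key Sᶜ hS' (by simpa using hS)))
      ⟨⟨Equiv.Set.sumCompl S, ?_⟩⟩
    rintro (a | a) (b | b)
    · simp
    · simpa using hno a a.2 b b.2
    · simpa using fun hab => hno b b.2 a a.2 hab.symm
    · simp

/-- A finite (nonempty) graph is quasi-threshold if and only if it has
no induced `P₄` and no induced `C₄`. -/
theorem isQT_iff_P4_C4_free {V : Type} [Finite V] [Nonempty V] (G : SimpleGraph V) :
    IsQT G ↔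
      (¬ Nonempty (SimpleGraph.pathGraph 4 ↪g G) ∧
        ¬ Nonempty (SimpleGraph.cycleGraph 4 ↪g G)) := by
  rw [← chordedPaths_iff]
  exact ⟨IsQT.chordedPaths, ChordedPaths.isQT⟩
end

section
/- Every connected finite graph G on at least two vertices is either the join of two nonempty graphs, or an inflation G = H[G_v : v ∈ V(H)] of a prime graph H on at least four vertices by nonempty graphs G_v. -/
/-!
Among all inflation structures `G = H[G_v : v ∈ V(H)]` with `|V(H)| ≥ 2` (there is at least the
trivial one, `H = G`), choose one with `|V(H)|` minimal. Then `H` is prime: contracting a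
nontrivial module of `H` to a single vertex would give a smaller inflation structure
(`IsInflation.contract`). If `|V(H)| = 2`, then connectedness of `G` forces the two vertices of
`H` to be adjacent, so `G` is a join (`IsInflation.join_of_card_eq_two`). The case `|V(H)| = 3`
is impossible, because in a graph on three vertices some vertex sees the other two alike, and
these two form a nontrivial module (`IsPrime.card_ne_three`). Hence otherwise `|V(H)| ≥ 4`.
-/

open scoped Classical

/-! ### Minimal inflation structures -/

/-- Contracting a nontrivial module `M` of `H` (to one of its vertices) turns an inflation of `H`
into an inflation of a graph with fewer vertices, but still at least two. -/
theorem IsInflation.contract {V ι : Type} [Finite ι] {G : SimpleGraph V} {H : SimpleGraph ι}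
    {φ : V → ι} (hφ : IsInflation G H φ) {M : Set ι} (hM : IsModule H M)
    (hns : ¬ M.Subsingleton) (hnu : M ≠ Set.univ) :
    ∃ (κ : Type) (K : SimpleGraph κ) (ψ : V → κ),
      Finite κ ∧ 2 ≤ Nat.card κ ∧ Nat.card κ < Nat.card ι ∧ IsInflation G K ψ := by
  obtain ⟨m, hm, m', hm', hne⟩ := Set.not_subsingleton_iff.mp hns
  obtain ⟨w, hw⟩ := (Set.ne_univ_iff_exists_notMem M).mp hnu
  -- The quotient is realised on a transversal: all vertices outside `M`, together with `m`.
  let S : Set ι := {v | v ∉ M ∨ v = m}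
  let r : ι → S := fun v => if h : v ∈ M then ⟨m, Or.inr rfl⟩ else ⟨v, Or.inl h⟩
  have hr_mem : ∀ v ∈ M, (r v : ι) = m := fun v hv => by simp [r, hv]
  have hr_not : ∀ v, v ∉ M → (r v : ι) = v := fun v hv => by simp [r, hv]
  refine ⟨S, H.induce S, r ∘ φ, inferInstance, ?_, ?_, ?_, ?_⟩
  · have hmw : m ≠ w := fun h => hw (h ▸ hm)
    have : Nontrivial S :=
      ⟨⟨m, Or.inr rfl⟩, ⟨w, Or.inl hw⟩, fun h => hmw (congrArg Subtype.val h)⟩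
    exact Finite.one_lt_card
  · refine Finite.card_subtype_lt (x := m') ?_
    rintro (h | h)
    · exact h hm'
    · exact hne h.symm
  · refine Function.Surjective.comp ?_ hφ.1
    rintro ⟨v, hv⟩
    refine ⟨v, Subtype.ext ?_⟩
    by_cases h : v ∈ M
    · rw [hr_mem v h]
      exact (hv.resolve_left (not_not_intro h)).symm
    · exact hr_not v h
  · intro x y hxy
    have hφxy : φ x ≠ φ y := fun h => hxy (congrArg r h)
    rw [hφ.2 x y hφxy, SimpleGraph.comap_adj]
    change _ ↔ H.Adj (r (φ x) : ι) (r (φ y) : ι)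
    by_cases hx : φ x ∈ M <;> by_cases hy : φ y ∈ M
    · exact absurd (Subtype.ext ((hr_mem _ hx).trans (hr_mem _ hy).symm)) hxy
    · rw [hr_mem _ hx, hr_not _ hy, H.adj_comm, H.adj_comm m]
      exact hM _ hx _ hm _ hy
    · rw [hr_not _ hx, hr_mem _ hy]
      exact hM _ hy _ hm _ hx
    · rw [hr_not _ hx, hr_not _ hy]

/-- Of the three vertices, one sees the other two alike, making those two a nontrivial module. -/
theorem IsPrime.card_ne_three {ι : Type} {H : SimpleGraph ι} (hH : IsPrime H) :
    Nat.card ι ≠ 3 := by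
  intro h3
  obtain ⟨a, b, c, hab, hac, hbc, huniv⟩ := Set.ncard_eq_three.mp ((Set.ncard_univ ι).trans h3)
  have hcov : ∀ v : ι, v = a ∨ v = b ∨ v = c := fun v => by
    have : v ∈ (Set.univ : Set ι) := trivial
    rw [huniv] at this
    simpa using this
  have key : ∀ x y z : ι, x ≠ y → x ≠ z → y ≠ z → (∀ v, v = x ∨ v = y ∨ v = z) →
      ¬ (H.Adj z x ↔ H.Adj z y) := by
    intro x y z hxy hxz hyz hc hiff
    have hmod : IsModule H {x, y} := by
      intro u hu v hv w hw
      have hwz : w = z := by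
        rcases hc w with h | h | h
        · exact absurd (Or.inl h) hw
        · exact absurd (Or.inr h) hw
        · exact h
      subst hwz
      rcases hu with rfl | rfl <;> rcases hv with rfl | rfl <;> tauto
    rcases hH.2 _ hmod with h | h
    · exact hxy (h (Or.inl rfl) (Or.inr rfl))
    · have : z ∈ ({x, y} : Set ι) := h ▸ trivial
      rcases this with h | h
      · exact hxz h.symm
      · exact hyz h.symm
  have h1 := key a b c hab hac hbc hcov
  have h2 := key a c b hac hab hbc.symm (fun v => by have := hcov v; tauto)
  have h3 := key b c a hbc hab.symm hac.symm (fun v => by have := hcov v; tauto)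
  rw [H.adj_comm c a, H.adj_comm c b] at h1
  rw [H.adj_comm b a] at h2
  tauto

/-- If `G` is connected and `H` has exactly two vertices, these must be adjacent, so that the two
fibers of an inflation exhibit `G` as a join. -/
theorem IsInflation.join_of_card_eq_two {V ι : Type} {G : SimpleGraph V} {H : SimpleGraph ι}
    {φ : V → ι} (hφ : IsInflation G H φ) (hc : G.Connected) (h2 : Nat.card ι = 2) :
    ∃ A B : Set V, A.Nonempty ∧ B.Nonempty ∧ Disjoint A B ∧ A ∪ B = Set.univ ∧
      ∀ a ∈ A, ∀ b ∈ B, G.Adj a b := by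
  obtain ⟨p, q, hpq, huniv⟩ := Nat.card_eq_two_iff.mp h2
  have hcov : ∀ v : ι, v = p ∨ v = q := fun v => by
    have : v ∈ (Set.univ : Set ι) := trivial
    rw [← huniv] at this
    simpa using this
  obtain ⟨x, hx⟩ := hφ.1 p
  obtain ⟨y, hy⟩ := hφ.1 q
  have hadj : H.Adj p q := by
    obtain ⟨W⟩ := hc.preconnected x y
    -- A walk between the two fibers uses an edge of `G` that crosses from one to the other.
    obtain ⟨d, -, hd1, hd2⟩ := W.exists_boundary_dart (φ ⁻¹' {p}) hx
      (fun h : φ y = p => hpq (h.symm.trans hy))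
    have hd1' : φ d.fst = p := hd1
    have hd2' : φ d.snd = q := (hcov _).resolve_left hd2
    have := (hφ.2 d.fst d.snd (by rw [hd1', hd2']; exact hpq)).mp d.adj
    rwa [hd1', hd2'] at this
  refine ⟨φ ⁻¹' {p}, φ ⁻¹' {q}, ⟨x, hx⟩, ⟨y, hy⟩, ?_, ?_, ?_⟩
  · exact Set.disjoint_left.mpr fun v (h1 : φ v = p) (h2 : φ v = q) => hpq (h1.symm.trans h2)
  · exact Set.eq_univ_of_forall fun v => hcov (φ v)
  · intro a (ha : φ a = p) b (hb : φ b = q)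
    rw [hφ.2 a b (by rw [ha, hb]; exact hpq), ha, hb]
    exact hadj

/-- Every connected finite graph on at least two vertices is either the
join of two nonempty graphs, or an inflation of a prime graph on at least four vertices
by nonempty graphs. -/
theorem connected_join_or_prime_inflation {V : Type} [Finite V] (G : SimpleGraph V)
    (hV : 2 ≤ Nat.card V) (hc : G.Connected) :
    (∃ A B : Set V, A.Nonempty ∧ B.Nonempty ∧ Disjoint A B ∧ A ∪ B = Set.univ ∧
      ∀ a ∈ A, ∀ b ∈ B, G.Adj a b) ∨
    (∃ (ι : Type) (H : SimpleGraph ι) (φ : V → ι),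
      IsPrime H ∧ 4 ≤ Nat.card ι ∧ IsInflation G H φ) := by
  have hex : ∃ n, ∃ (ι : Type) (H : SimpleGraph ι) (φ : V → ι),
      Finite ι ∧ 2 ≤ Nat.card ι ∧ Nat.card ι = n ∧ IsInflation G H φ :=
    ⟨_, V, G, id, inferInstance, hV, rfl, Function.surjective_id, fun _ _ _ => Iff.rfl⟩
  obtain ⟨ι, H, φ, hfin, h2, hn, hφ⟩ := Nat.find_spec hex
  have hprime : IsPrime H := by
    refine ⟨h2, fun M hM => ?_⟩
    by_contra hcon
    obtain ⟨hns, hnu⟩ := not_or.mp hcon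
    obtain ⟨κ, K, ψ, hκ, hκ2, hlt, hψ⟩ := hφ.contract hM hns hnu
    exact Nat.find_min hex (hn ▸ hlt) ⟨κ, K, ψ, hκ, hκ2, rfl, hψ⟩
  rcases h2.eq_or_lt with h | h
  · exact Or.inl (hφ.join_of_card_eq_two hc h.symm)
  · have h3 := hprime.card_ne_three
    exact Or.inr ⟨ι, H, φ, hprime, by omega, hφ⟩
end
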